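/- arXiv:math/0203180 — 2 statements merged into one kernel-verified Lean document; each statement's English description precedes it below -/
import Mathlib

section
/- Let t ≥ 2 and let p_1, …, p_t ∈ k be algebraically independent over the prime subfield of k (in particular each p_i is nonzero and not equal to 1). Then the k-subalgebra of End_k(k[Y,Y⁻¹]) generated by the Eulerian derivatives D_{p_1}, …, D_{p_t} is a noetherian ring (both left and right noetherian). -/
set_option synthInstance.maxHeartbeats 1000000
set_option maxHeartbeats 4000000
set_option maxSynthPendingDepth 3

noncomputable section

section NoetherianEulerian

open MvPolynomial Finset

section TotalDegree

variable {k σ : Type*} [Field k]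

lemma totalDegree_mul_le_of_le {f g : MvPolynomial σ k} {a b n : ℕ} (hf : f.totalDegree ≤ a)
    (hg : g.totalDegree ≤ b) (h : a + b ≤ n) : (f * g).totalDegree ≤ n :=
  (totalDegree_mul f g).trans ((add_le_add hf hg).trans h)

lemma totalDegree_sum_le_of_le {ι : Type*} {s : Finset ι} {f : ι → MvPolynomial σ k} {n : ℕ}
    (h : ∀ i ∈ s, (f i).totalDegree ≤ n) : (∑ i ∈ s, f i).totalDegree ≤ n :=
  (totalDegree_finsetSum s f).trans (Finset.sup_le h)

lemma totalDegree_X_sub_C_le (i : σ) (c : k) : (X i - C c).totalDegree ≤ 1 :=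
  (totalDegree_sub_C_le _ _).trans (totalDegree_X i).le

lemma totalDegree_C_mul_le (c : k) (f : MvPolynomial σ k) :
    (C c * f).totalDegree ≤ f.totalDegree :=
  totalDegree_mul_le_of_le (totalDegree_C c).le le_rfl (by simp)

/-- Expansion at `x` of a polynomial of degree at most `n + 1`. -/
lemma exists_eq_add_sum_X_sub_C_mul [Fintype σ] (x : σ → k) (n : ℕ) (f : MvPolynomial σ k)
    (hf : f.totalDegree ≤ n + 1) :
    ∃ h : σ → MvPolynomial σ k, (∀ i, (h i).totalDegree ≤ n) ∧
      f = C (eval x f) + ∑ i, (X i - C (x i)) * h i := by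
  classical
  have key : ∀ (N : ℕ) (m : σ →₀ ℕ), m.degree = N → N ≤ n + 1 →
      ∃ h : σ → MvPolynomial σ k, (∀ i, (h i).totalDegree ≤ n) ∧
        monomial m 1 = C (eval x (monomial m 1)) + ∑ i, (X i - C (x i)) * h i := by
    intro N
    induction N with
    | zero =>
      intro m hm _
      have : m = 0 := (Finsupp.degree_eq_zero_iff m).1 hm
      subst this
      exact ⟨0, by simp, by simp⟩
    | succ N ih =>
      intro m hm hN
      obtain ⟨i, hi⟩ : ∃ i, m i ≠ 0 := by
        by_contra! h
        have : m = 0 := by ext i; simpa using h i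
        simp [this] at hm
      have hle : Finsupp.single i 1 ≤ m := by
        simpa [Finsupp.single_le_iff] using Nat.one_le_iff_ne_zero.2 hi
      obtain ⟨m', rfl⟩ : ∃ m', m = Finsupp.single i 1 + m' :=
        ⟨m - Finsupp.single i 1, (add_tsub_cancel_of_le hle).symm⟩
      have hm' : m'.degree = N := by
        rw [map_add, Finsupp.degree_single] at hm; omega
      obtain ⟨h, hh, e⟩ := ih m' hm' (by omega)
      have hmul : (monomial (Finsupp.single i 1 + m') 1 : MvPolynomial σ k)
          = X i * monomial m' 1 := by
        rw [X, monomial_mul, one_mul]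
      refine ⟨fun j => C (x i) * h j + if j = i then monomial m' 1 else 0, fun j => ?_, ?_⟩
      · refine (totalDegree_add _ _).trans (max_le ((totalDegree_C_mul_le _ _).trans (hh j)) ?_)
        split_ifs
        · refine (totalDegree_monomial_le _ _).trans ?_
          have : (m'.sum fun _ => id) = N := by rw [← hm']; rfl
          omega
        · simp
      · rw [hmul]
        simp only [mul_add, Finset.sum_add_distrib, mul_ite, mul_zero, Finset.sum_ite_eq',
          Finset.mem_univ, if_true, map_mul, eval_X]
        have e2 : ∑ j, (X j - C (x j)) * (C (x i) * h j)
            = C (x i) * ∑ j, (X j - C (x j)) * h j := by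
          rw [Finset.mul_sum]; exact Finset.sum_congr rfl fun j _ => by ring
        rw [e2]
        linear_combination C (x i) * e
  choose! h hh e using fun m (hm : m ∈ f.support) => key m.degree m rfl ((le_totalDegree hm).trans hf)
  refine ⟨fun i => ∑ m ∈ f.support, C (coeff m f) * h m i, fun i => ?_, ?_⟩
  · exact totalDegree_sum_le_of_le fun m hm => (totalDegree_C_mul_le _ _).trans (hh m hm i)
  · have hf' : f = ∑ m ∈ f.support, C (coeff m f) * monomial m 1 := by
      conv_lhs => rw [f.as_sum]
      simp [C_mul_monomial]
    have : ∑ i, (X i - C (x i)) * ∑ m ∈ f.support, C (coeff m f) * h m i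
        = ∑ m ∈ f.support, C (coeff m f) * ∑ i, (X i - C (x i)) * h m i := by
      simp only [Finset.mul_sum]
      rw [Finset.sum_comm]
      exact Finset.sum_congr rfl fun j _ => Finset.sum_congr rfl fun _ _ => by ring
    rw [this]
    conv_lhs => rw [hf']
    have e3 : (C (eval x f) : MvPolynomial σ k)
        = ∑ m ∈ f.support, C (coeff m f) * C (eval x (monomial m 1)) := by
      conv_lhs => rw [hf']
      simp only [map_sum, map_mul, eval_C]
    rw [e3, ← Finset.sum_add_distrib]
    exact Finset.sum_congr rfl fun m hm => by rw [← mul_add, ← e m hm]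

end TotalDegree

section Interpolation

variable {k σ : Type*} [Field k] {q : ℕ → σ → k}

/-- The polynomials of degree at most `n` vanishing at the points `q j`, `j ∈ s`. -/
def vanishingSubmodule (q : ℕ → σ → k) (s : Finset ℕ) (n : ℕ) :
    Submodule k (MvPolynomial σ k) where
  carrier := {f | f.totalDegree ≤ n ∧ ∀ j ∈ s, eval (q j) f = 0}
  add_mem' hf hg := ⟨(totalDegree_add _ _).trans (max_le hf.1 hg.1), fun j hj => by
    rw [map_add, hf.2 j hj, hg.2 j hj, add_zero]⟩
  zero_mem' := by simp
  smul_mem' c f hf := ⟨(totalDegree_smul_le _ _).trans hf.1, fun j hj => by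
    rw [smul_eval, hf.2 j hj, mul_zero]⟩

lemma finiteDimensional_of_totalDegree_le [Finite σ] {M : Submodule k (MvPolynomial σ k)} {n : ℕ}
    (h : ∀ f ∈ M, f.totalDegree ≤ n) : FiniteDimensional k M :=
  Submodule.finiteDimensional_of_le
    (fun f hf => (mem_restrictTotalDegree σ n f).2 (h f hf) : M ≤ restrictTotalDegree σ k n)

/-- Any values at the points `q j`, `j ∈ s`, are attained by a polynomial of degree at most `n`. -/
def Interpolates (q : ℕ → σ → k) (s : Finset ℕ) (n : ℕ) : Prop :=
  ∀ c : ℕ → k, ∃ f : MvPolynomial σ k, f.totalDegree ≤ n ∧ ∀ j ∈ s, eval (q j) f = c j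

lemma interpolates_of_exists_ne_zero {s : Finset ℕ} {n : ℕ}
    (h : ∀ c ∈ s, ∃ f : MvPolynomial σ k, f.totalDegree ≤ n ∧
      (∀ j ∈ s.erase c, eval (q j) f = 0) ∧ eval (q c) f ≠ 0) : Interpolates q s n := by
  classical
  intro v
  choose! f hf h0 h1 using h
  refine ⟨∑ c ∈ s, C (v c / eval (q c) (f c)) * f c,
    totalDegree_sum_le_of_le fun c hc => (totalDegree_C_mul_le _ _).trans (hf c hc),
    fun j hj => ?_⟩
  rw [map_sum, Finset.sum_eq_single_of_mem j hj]
  · rw [map_mul, eval_C, div_mul_cancel₀ _ (h1 j hj)]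
  · intro c hc hcj
    rw [map_mul, h0 c hc j (Finset.mem_erase.2 ⟨hcj.symm, hj⟩), mul_zero]

/-- No three of the points `q n` lie on a line in the plane of the coordinates `i₀`, `i₁`,
and the `i₀`-coordinates of the points are distinct. -/
structure NoThreeCollinear (q : ℕ → σ → k) (i₀ i₁ : σ) : Prop where
  injective : Function.Injective fun n => q n i₀
  det_ne_zero : ∀ a b c, a ≠ b → b ≠ c → a ≠ c →
    (q b i₀ - q a i₀) * (q c i₁ - q a i₁) - (q b i₁ - q a i₁) * (q c i₀ - q a i₀) ≠ 0

namespace NoThreeCollinear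

variable {i₀ i₁ : σ}

lemma eval_X_sub_C_ne_zero (hq : NoThreeCollinear q i₀ i₁) {a c : ℕ} (h : a ≠ c) :
    eval (q c) (X i₀ - C (q a i₀)) ≠ 0 := by
  simpa [sub_eq_zero] using fun e => h (hq.injective e).symm

lemma exists_line (hq : NoThreeCollinear q i₀ i₁) {a b c : ℕ} (hab : a ≠ b) (hbc : b ≠ c)
    (hac : a ≠ c) :
    ∃ f : MvPolynomial σ k, f.totalDegree ≤ 1 ∧ eval (q a) f = 0 ∧ eval (q b) f = 0 ∧
      eval (q c) f ≠ 0 := by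
  refine ⟨C (q b i₀ - q a i₀) * (X i₁ - C (q a i₁)) - C (q b i₁ - q a i₁) * (X i₀ - C (q a i₀)),
    ?_, ?_, ?_, ?_⟩
  · exact (totalDegree_sub _ _).trans (max_le
      ((totalDegree_C_mul_le _ _).trans (totalDegree_X_sub_C_le _ _))
      ((totalDegree_C_mul_le _ _).trans (totalDegree_X_sub_C_le _ _)))
  · simp
  · simp; ring
  · simpa using hq.det_ne_zero a b c hab hbc hac

lemma exists_eval_ne_zero (hq : NoThreeCollinear q i₀ i₁) (c r : ℕ) (s : Finset ℕ) (hc : c ∉ s)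
    (hr : 2 * r ≤ #s) :
    ∃ f : MvPolynomial σ k, f.totalDegree + r ≤ #s ∧ (∀ j ∈ s, eval (q j) f = 0) ∧
      eval (q c) f ≠ 0 := by
  classical
  induction r generalizing s with
  | zero =>
    refine ⟨∏ j ∈ s, (X i₀ - C (q j i₀)), ?_, fun j hj => ?_, ?_⟩
    · refine (totalDegree_finsetProd _ _).trans ?_
      simpa using Finset.sum_le_card_nsmul s _ 1 fun j _ => totalDegree_X_sub_C_le i₀ (q j i₀)
    · rw [map_prod]
      exact Finset.prod_eq_zero hj (by simp)
    · rw [map_prod]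
      exact Finset.prod_ne_zero_iff.2 fun j hj =>
        hq.eval_X_sub_C_ne_zero (by rintro rfl; exact hc hj)
  | succ r ih =>
    obtain ⟨a, ha, b, hb, hab⟩ := Finset.one_lt_card.1 (show 1 < #s by omega)
    have hb' : b ∈ s.erase a := Finset.mem_erase.2 ⟨hab.symm, hb⟩
    have hcard : #((s.erase a).erase b) = #s - 2 := by
      rw [Finset.card_erase_of_mem hb', Finset.card_erase_of_mem ha]; omega
    obtain ⟨f, hf, h0, h1⟩ := ih ((s.erase a).erase b) (by simp [hc]) (by omega)
    obtain ⟨l, hl, la, lb, lc⟩ := hq.exists_line (a := a) (b := b) (c := c) hab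
      (by rintro rfl; exact hc hb) (by rintro rfl; exact hc ha)
    refine ⟨f * l, ?_, fun j hj => ?_, by simp [h1, lc]⟩
    · have := totalDegree_mul_le_of_le (le_refl f.totalDegree) hl le_rfl
      omega
    · by_cases hja : j = a
      · simp [hja, la]
      by_cases hjb : j = b
      · simp [hjb, lb]
      rw [map_mul, h0 j (by simp [hja, hjb, hj]), zero_mul]

lemma interpolates (hq : NoThreeCollinear q i₀ i₁) {n r : ℕ} {s : Finset ℕ}
    (hn : #s ≤ n + 1 + r) (hr : 2 * r < #s ∨ r = 0) :
    Interpolates q s n := by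
  refine interpolates_of_exists_ne_zero fun c hc => ?_
  have hcard := Finset.card_erase_of_mem hc
  have hpos := Finset.card_pos.2 ⟨c, hc⟩
  obtain ⟨f, hf, h⟩ := hq.exists_eval_ne_zero c r (s.erase c) (Finset.notMem_erase c s) (by omega)
  exact ⟨f, by omega, h⟩

end NoThreeCollinear

/-- A relation `∑ g i * h i` vanishing on a set of points where `g i₀` has no zero can be rewritten,
using Koszul syzygies, with coefficients that vanish on this set. -/
lemma exists_sum_mul_eq_of_vanishing {ι : Type*} [Fintype ι] {g h : ι → MvPolynomial σ k} {i₀ : ι}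
    {s : Finset ℕ} {d : ι → ℕ} {e : ℕ} (hg : ∀ i, (g i).totalDegree ≤ d i)
    (hg₀ : ∀ j ∈ s, eval (q j) (g i₀) ≠ 0) (hh : ∀ i, (h i).totalDegree ≤ e - d i)
    (hf : ∀ j ∈ s, eval (q j) (∑ i, g i * h i) = 0) (hd : ∀ i, d i + d i₀ ≤ e)
    (hs : ∀ i, Interpolates q s (e - d i - d i₀)) :
    ∃ h' : ι → MvPolynomial σ k, (∀ i, h' i ∈ vanishingSubmodule q s (e - d i)) ∧
      ∑ i, g i * h' i = ∑ i, g i * h i := by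
  classical
  choose a ha hav using fun i => hs i fun j => eval (q j) (h i) / eval (q j) (g i₀)
  set h' : ι → MvPolynomial σ k :=
    fun i => h i - a i * g i₀ + if i = i₀ then ∑ j, a j * g j else 0 with h'_def
  have hsum : ∑ i, g i * h' i = ∑ i, g i * h i := by
    simp only [h'_def, mul_add, mul_sub, Finset.sum_add_distrib, Finset.sum_sub_distrib, mul_ite,
      mul_zero, Finset.sum_ite_eq', Finset.mem_univ, if_true]
    have : ∑ i, g i * (a i * g i₀) = g i₀ * ∑ j, a j * g j := by
      rw [Finset.mul_sum]; exact Finset.sum_congr rfl fun _ _ => by ring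
    rw [this]; ring
  have hne : ∀ i, i ≠ i₀ → ∀ j ∈ s, eval (q j) (h' i) = 0 := by
    intro i hi j hj
    simp [h'_def, hi, hav i j hj, hg₀ j hj]
  refine ⟨h', fun i => ⟨?_, fun j hj => ?_⟩, hsum⟩
  · refine (totalDegree_add _ _).trans (max_le ((totalDegree_sub _ _).trans (max_le (hh i) ?_)) ?_)
    · exact totalDegree_mul_le_of_le (ha i) (hg i₀) (by have := hd i; omega)
    · split_ifs with hi
      · subst hi
        exact totalDegree_sum_le_of_le fun j _ =>
          totalDegree_mul_le_of_le (ha j) (hg j) (by have := hd j; omega)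
      · simp
  · by_cases hi : i = i₀
    · subst hi
      have h2 := hf j hj
      rw [← hsum, map_sum, Finset.sum_eq_single i (fun b _ hb => by simp [hne b hb j hj])
        (by simp), map_mul] at h2
      exact (mul_eq_zero.1 h2).resolve_left (hg₀ j hj)
    · exact hne i hi j hj

/-- A polynomial vanishing at `q e` and on `s` is a combination of the `X i - C (q e i)` with
coefficients vanishing on `s`. -/
lemma exists_eq_sum_X_sub_C_mul_vanishing [Fintype σ] {i₀ i₁ : σ} (hq : NoThreeCollinear q i₀ i₁)
    {s : Finset ℕ} {n e : ℕ} (he : e ∉ s) (hs : #s ≤ n) {f : MvPolynomial σ k}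
    (hf : f ∈ vanishingSubmodule q (insert e s) (n + 1)) :
    ∃ h : σ → MvPolynomial σ k, (∀ i, h i ∈ vanishingSubmodule q s n) ∧
      ∑ i, (X i - C (q e i)) * h i = f := by
  obtain ⟨h, hh, e1⟩ := exists_eq_add_sum_X_sub_C_mul (q e) n f hf.1
  rw [hf.2 e (by simp), map_zero, zero_add] at e1
  rcases s.eq_empty_or_nonempty with rfl | hne
  · exact ⟨h, fun i => ⟨hh i, by simp⟩, e1.symm⟩
  have hpos := hne.card_pos
  obtain ⟨h', h1, h2⟩ := exists_sum_mul_eq_of_vanishing (q := q) (s := s) (i₀ := i₀)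
    (g := fun i => X i - C (q e i)) (h := h) (d := fun _ => 1) (e := n + 1)
    (fun i => totalDegree_X_sub_C_le _ _)
    (fun j hj => hq.eval_X_sub_C_ne_zero (by rintro rfl; exact he hj))
    (fun i => by simpa using hh i)
    (fun j hj => by rw [← e1]; exact hf.2 j (by simp [hj]))
    (fun _ => by omega)
    (fun _ => hq.interpolates (r := 0) (by omega) (Or.inr rfl))
  exact ⟨h', by simpa using h1, by rw [h2, ← e1]⟩

end Interpolation

section Generators

variable {k σ : Type*} [Field k]

/-- Setting the variable `none` equal to `1`. -/
def dehomogenize : MvPolynomial (Option σ) k →ₐ[k] MvPolynomial σ k :=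
  aeval fun o => o.elim 1 X

lemma totalDegree_dehomogenize_le {F : MvPolynomial (Option σ) k} {n : ℕ} (hF : F.IsHomogeneous n) :
    (dehomogenize F).totalDegree ≤ n := by
  rw [dehomogenize, aeval_def, eval₂_eq]
  refine totalDegree_sum_le_of_le fun m hm => (totalDegree_C_mul_le _ _).trans ?_
  refine (totalDegree_finsetProd _ _).trans ?_
  have hdeg : m.degree = n := by
    have := hF (mem_support_iff.1 hm)
    rw [Finsupp.degree_eq_weight_one]
    exact this
  rw [← hdeg, Finsupp.degree_apply]
  refine Finset.sum_le_sum fun o _ => (totalDegree_pow _ _).trans ?_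
  cases o <;> simp

lemma exists_dehomogenize_eq {f : MvPolynomial σ k} {n : ℕ} (hf : f.totalDegree ≤ n) :
    ∃ F : MvPolynomial (Option σ) k, F.IsHomogeneous n ∧ dehomogenize F = f := by
  refine ⟨∑ m ∈ f.support, rename some (monomial m (coeff m f)) * X none ^ (n - m.degree), ?_, ?_⟩
  · refine IsHomogeneous.sum _ _ _ fun m hm => ?_
    have hle : m.degree ≤ n := (le_totalDegree hm).trans hf
    have h1 : (monomial m (coeff m f)).IsHomogeneous m.degree := isHomogeneous_monomial _ rfl
    have h2 := (h1.rename_isHomogeneous (f := (some : σ → Option σ))).mul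
      ((isHomogeneous_X k (none : Option σ)).pow (n - m.degree))
    rwa [one_mul, add_tsub_cancel_of_le hle] at h2
  · conv_rhs => rw [f.as_sum]
    rw [map_sum]
    refine Finset.sum_congr rfl fun m _ => ?_
    rw [map_mul, map_pow, dehomogenize, aeval_rename, aeval_X]
    simp only [Option.elim_none, one_pow, mul_one]
    exact aeval_X_left_apply _

lemma homogeneousComponent_mul_of_isHomogeneous {F G : MvPolynomial σ k} {d e : ℕ}
    (hF : F.IsHomogeneous d) (h : d ≤ e) :
    homogeneousComponent e (F * G) = F * homogeneousComponent (e - d) G := by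
  let := gradedAlgebra (σ := σ) (R := k)
  have key := DirectSum.coe_decompose_mul_of_left_mem_of_le (homogeneousSubmodule σ k)
    (b := G) (show F ∈ homogeneousSubmodule σ k d from hF) h
  exact (decomposition.decompose'_apply (F * G) e).symm.trans
    (key.trans (congrArg (F * ·) (decomposition.decompose'_apply G (e - d))))

/-- The Hilbert basis theorem for the Rees ring of the degree filtration of a polynomial ring. -/
lemma exists_generators [Finite σ] (J : ℕ → Submodule k (MvPolynomial σ k))
    (hJ : ∀ d, ∀ f ∈ J d, f.totalDegree ≤ d) :
    ∃ (m : ℕ) (g : Fin m → MvPolynomial σ k) (d : Fin m → ℕ), (∀ i, g i ∈ J (d i)) ∧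
      ∀ e, (∀ i, d i ≤ e) → ∀ f ∈ J e, ∃ h : Fin m → MvPolynomial σ k,
        (∀ i, (h i).totalDegree ≤ e - d i) ∧ ∑ i, g i * h i = f := by
  classical
  set S : Set (MvPolynomial (Option σ) k) :=
    {F | ∃ d, F.IsHomogeneous d ∧ dehomogenize F ∈ J d} with hS
  obtain ⟨T, hTS, hT⟩ := (Submodule.fg_span_iff_fg_span_finset_subset
    (R := MvPolynomial (Option σ) k) S).1 (IsNoetherian.noetherian _)
  have hG : ∀ i : Fin #T, ∃ d, (T.equivFin.symm i).1.IsHomogeneous d ∧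
      dehomogenize (T.equivFin.symm i).1 ∈ J d := fun i => hTS (T.equivFin.symm i).2
  choose d hd hdJ using hG
  refine ⟨#T, fun i => dehomogenize (T.equivFin.symm i).1, d, hdJ, fun e he f hf => ?_⟩
  obtain ⟨F, hF, rfl⟩ := exists_dehomogenize_eq (hJ e f hf)
  have hmem : F ∈ Submodule.span (MvPolynomial (Option σ) k) (T : Set (MvPolynomial (Option σ) k)) := by
    rw [← hT]; exact Submodule.subset_span ⟨e, hF, hf⟩
  obtain ⟨c, -, hc⟩ := Submodule.mem_span_finset.1 hmem
  refine ⟨fun i => dehomogenize (homogeneousComponent (e - d i) (c (T.equivFin.symm i).1)),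
    fun i => totalDegree_dehomogenize_le (homogeneousComponent_isHomogeneous _ _), ?_⟩
  have hc' : F = ∑ i, (T.equivFin.symm i).1 * c (T.equivFin.symm i).1 := by
    rw [← hc, ← Finset.sum_coe_sort T, ← Equiv.sum_comp T.equivFin.symm]
    exact Finset.sum_congr rfl fun i _ => by rw [smul_eq_mul, mul_comm]
  have hcomp := congrArg (homogeneousComponent e) hc'
  rw [homogeneousComponent_of_mem hF, if_pos rfl, map_sum] at hcomp
  conv_rhs => rw [hcomp]
  rw [map_sum]
  refine Finset.sum_congr rfl fun i _ => ?_
  rw [← map_mul]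
  rw [homogeneousComponent_mul_of_isHomogeneous (hd i) (he i)]

end Generators

section Stabilization

variable {k V : Type*} [Field k] [AddCommGroup V] [Module k V]

/-- The image of `X` in the quotient by `J`. -/
abbrev imageQuotient (X J : Submodule k V) : Submodule k (V ⧸ J) := X.map J.mkQ

lemma imageQuotient_le_map {X J X' J' : Submodule k V} {w : V →ₗ[k] V} (hJ : J ≤ J'.comap w)
    (hX : ∀ x ∈ X', ∃ y ∈ X, x - w y ∈ J') :
    imageQuotient X' J' ≤ (imageQuotient X J).map (J.mapQ J' w hJ) := by
  rintro _ ⟨x, hx, rfl⟩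
  obtain ⟨y, hy, h⟩ := hX x hx
  refine ⟨J.mkQ y, ⟨y, hy, rfl⟩, ?_⟩
  simp only [Submodule.mkQ_apply, Submodule.mapQ_apply]
  exact ((Submodule.Quotient.eq _).2 h).symm

lemma finrank_imageQuotient_le {X J X' J' : Submodule k V} [FiniteDimensional k X]
    {w : V →ₗ[k] V} (hJ : J ≤ J'.comap w) (hX : ∀ x ∈ X', ∃ y ∈ X, x - w y ∈ J') :
    Module.finrank k (imageQuotient X' J') ≤ Module.finrank k (imageQuotient X J) :=
  (Submodule.finrank_mono (imageQuotient_le_map hJ hX)).trans (Submodule.finrank_map_le _ _)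

lemma mem_of_finrank_imageQuotient_eq {X J X' J' : Submodule k V} [FiniteDimensional k X]
    {w : V →ₗ[k] V} (hJ : J ≤ J'.comap w) (hX : ∀ x ∈ X', ∃ y ∈ X, x - w y ∈ J')
    (h : Module.finrank k (imageQuotient X' J') = Module.finrank k (imageQuotient X J))
    {x : V} (hx : x ∈ X) (hwx : w x ∈ J') : x ∈ J := by
  set φ := (J.mapQ J' w hJ).domRestrict (imageQuotient X J)
  have h1 : Module.finrank k (imageQuotient X' J') ≤ Module.finrank k φ.range := by
    have e : φ.range = (imageQuotient X J).map (J.mapQ J' w hJ) := by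
      rw [LinearMap.range_domRestrict]
    rw [e]
    exact Submodule.finrank_mono (imageQuotient_le_map hJ hX)
  have h2 := φ.finrank_range_add_finrank_ker
  have h3 : φ.ker = ⊥ := Submodule.finrank_eq_zero.1 (by omega)
  have h4 : (⟨J.mkQ x, x, hx, rfl⟩ : imageQuotient X J) ∈ φ.ker := by
    rw [LinearMap.mem_ker]
    change J.mapQ J' w hJ (J.mkQ x) = 0
    rw [Submodule.mkQ_apply, Submodule.mapQ_apply, Submodule.Quotient.mk_eq_zero]
    exact hwx
  rw [h3, Submodule.mem_bot, Subtype.ext_iff] at h4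
  exact (Submodule.Quotient.mk_eq_zero J).1 h4

/-- Let `J e ≤ X e` be finite-dimensional and let `w e` map `J e` to `J (e + 1)` and induce
surjections `X e / J e → X (e + 1) / J (e + 1)` for large `e`. These are eventually injective. -/
lemma eventually_mem_of_map_mem (X J : ℕ → Submodule k V) (w : ℕ → V →ₗ[k] V) (E : ℕ)
    [∀ e, FiniteDimensional k (X e)] (hJ : ∀ e, J e ≤ (J (e + 1)).comap (w e))
    (hX : ∀ e ≥ E, ∀ x ∈ X (e + 1), ∃ y ∈ X e, x - w e y ∈ J (e + 1)) :
    ∃ D, ∀ e ≥ D, ∀ x ∈ X e, w e x ∈ J (e + 1) → x ∈ J e := by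
  set c : ℕ → ℕ := fun n => Module.finrank k (imageQuotient (X (E + n)) (J (E + n)))
  have hc : Antitone c := antitone_nat_of_succ_le fun n =>
    finrank_imageQuotient_le (hJ (E + n)) (hX (E + n) (by omega))
  set n := Function.argmin c
  refine ⟨E + n, fun e he x hx hwx => ?_⟩
  obtain ⟨m, rfl⟩ : ∃ m, e = E + m := ⟨e - E, by omega⟩
  have h1 : c n ≤ c (m + 1) := Function.argmin_le c _
  have h2 : c m ≤ c n := hc (by omega)
  have h3 : c (m + 1) ≤ c m := hc (Nat.le_succ m)
  exact mem_of_finrank_imageQuotient_eq (hJ (E + m)) (hX (E + m) (by omega))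
    (h3.antisymm (h2.trans h1)) hx hwx

end Stabilization

section Core

variable {k σ : Type*} [Field k] [Fintype σ] {q : ℕ → σ → k}

/-- The combinations of the `g i` with coefficients in the `M i`. -/
def combinations {ι : Type*} [Fintype ι] (g : ι → MvPolynomial σ k)
    (M : ι → Submodule k (MvPolynomial σ k)) : Submodule k (MvPolynomial σ k) where
  carrier := {f | ∃ h : ι → MvPolynomial σ k, (∀ i, h i ∈ M i) ∧ ∑ i, g i * h i = f}
  add_mem' := by
    rintro _ _ ⟨h, hh, rfl⟩ ⟨h', hh', rfl⟩
    exact ⟨h + h', fun i => add_mem (hh i) (hh' i), by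
      simp [mul_add, Finset.sum_add_distrib]⟩
  zero_mem' := ⟨0, fun i => zero_mem _, by simp⟩
  smul_mem' := by
    rintro c _ ⟨h, hh, rfl⟩
    exact ⟨c • h, fun i => Submodule.smul_mem _ _ (hh i), by simp [Finset.smul_sum]⟩

/-- The span of the products of elements of `M` with linear forms vanishing at `x`. -/
abbrev linearFormsMul (x : σ → k) (M : Submodule k (MvPolynomial σ k)) :
    Submodule k (MvPolynomial σ k) :=
  combinations (fun i => X i - C (x i)) fun _ => M

lemma X_sub_C_mul_mem_linearFormsMul (x : σ → k) {M : Submodule k (MvPolynomial σ k)} (i : σ)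
    {f : MvPolynomial σ k} (hf : f ∈ M) : (X i - C (x i)) * f ∈ linearFormsMul x M := by
  classical
  refine ⟨fun j => if j = i then f else 0, fun j => ?_, by simp⟩
  dsimp only
  split_ifs
  exacts [hf, zero_mem _]

lemma mul_mem_linearFormsMul {i₀ i₁ : σ} (hq : NoThreeCollinear q i₀ i₁)
    {J : ℕ → Submodule k (MvPolynomial σ k)} {g f : MvPolynomial σ k} {d n : ℕ}
    (hg : ∀ f ∈ vanishingSubmodule q (Ico d (d + n)) n, g * f ∈ J (d + n))
    (hf : f ∈ vanishingSubmodule q (Ico d (d + n + 1)) (n + 1)) :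
    g * f ∈ linearFormsMul (q (d + n)) (J (d + n)) := by
  rw [← Finset.insert_Ico_right_eq_Ico_add_one (by omega)] at hf
  obtain ⟨h, hh, rfl⟩ := exists_eq_sum_X_sub_C_mul_vanishing hq (by simp) (by simp) hf
  exact ⟨fun i => g * h i, fun i => hg _ (hh i), by
    rw [Finset.mul_sum]; exact Finset.sum_congr rfl fun i _ => by ring⟩

lemma mul_mem_of_vanishing {i₀ i₁ : σ} (hq : NoThreeCollinear q i₀ i₁)
    {J : ℕ → Submodule k (MvPolynomial σ k)}
    (hJ : ∀ d, linearFormsMul (q d) (J d) ≤ J (d + 1))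
    {g : MvPolynomial σ k} {d : ℕ} (hg : g ∈ J d) (n : ℕ) :
    ∀ f ∈ vanishingSubmodule q (Ico d (d + n)) n, g * f ∈ J (d + n) := by
  induction n with
  | zero =>
    intro f hf
    rw [totalDegree_eq_zero_iff_eq_C.1 (Nat.le_zero.1 hf.1), mul_comm, ← smul_eq_C_mul]
    exact Submodule.smul_mem _ _ hg
  | succ n ih => exact fun f hf => hJ _ (mul_mem_linearFormsMul hq ih hf)

/-- A noetherianity statement for a critically dense sequence of points `q d`: a sequence of spaces
of polynomials of degree at most `d`, vanishing at `q 0, …, q (d - 1)`, which is closed under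
multiplication of its `d`-th term with the linear forms vanishing at `q d`, is eventually generated
by these multiplications. -/
theorem exists_forall_le_linearFormsMul {i₀ i₁ : σ} (hq : NoThreeCollinear q i₀ i₁)
    (hcrit : ∀ f : MvPolynomial σ k, f ≠ 0 → ∃ N, ∀ n ≥ N, eval (q n) f ≠ 0)
    (J : ℕ → Submodule k (MvPolynomial σ k))
    (hJV : ∀ d, J d ≤ vanishingSubmodule q (range d) d)
    (hJ : ∀ d, linearFormsMul (q d) (J d) ≤ J (d + 1)) :
    ∃ D, ∀ d ≥ D, J (d + 1) ≤ linearFormsMul (q d) (J d) := by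
  classical
  obtain ⟨m, g, d, hg, hgen⟩ := exists_generators J fun d f hf => (hJV d hf).1
  have hgd : ∀ i, (g i).totalDegree ≤ d i := fun i => (hJV _ (hg i)).1
  have hdsum : ∀ i, d i ≤ ∑ i, d i := fun i =>
    Finset.single_le_sum (fun _ _ => Nat.zero_le _) (Finset.mem_univ i)
  by_cases h0 : ∀ i, g i = 0
  · refine ⟨∑ i, d i, fun e he f hf => ?_⟩
    obtain ⟨h, -, rfl⟩ := hgen (e + 1) (fun i => (hdsum i).trans (by omega)) f hf
    simp [h0]
  push Not at h0
  obtain ⟨a, ha⟩ := h0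
  obtain ⟨N₀, hN₀⟩ := hcrit _ ha
  set N := N₀ + ∑ i, d i with hN
  have hdN : ∀ i, d i ≤ N := fun i => (hdsum i).trans (by omega)
  have hgN : ∀ j ≥ N, eval (q j) (g a) ≠ 0 := fun j hj => hN₀ j (by omega)
  set Y : ℕ → Submodule k (MvPolynomial σ k) := fun e =>
    combinations g fun i => vanishingSubmodule q (Ico N e) (e - d i) with hY
  have hYfin : ∀ e, FiniteDimensional k (Y e) := fun e => by
    refine finiteDimensional_of_totalDegree_le (n := e + N) ?_
    rintro _ ⟨h, hh, rfl⟩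
    exact totalDegree_sum_le_of_le fun i _ => totalDegree_mul_le_of_le (hgd i) (hh i).1
      (by have := hdN i; omega)
  have hJY : ∀ e ≥ 5 * N + 1, J e ≤ Y e := by
    intro e he f hf
    obtain ⟨h, hh, rfl⟩ := hgen e (fun i => (hdN i).trans (by omega)) f hf
    refine exists_sum_mul_eq_of_vanishing (i₀ := a) (s := Ico N e) hgd
      (fun j hj => hgN j (Finset.mem_Ico.1 hj).1) hh
      (fun j hj => (hJV e hf).2 j (Finset.mem_range.2 (Finset.mem_Ico.1 hj).2))
      (fun i => by have := hdN i; have := hdN a; omega) (fun i => ?_)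
    have := hdN i
    have := hdN a
    refine hq.interpolates (r := d i + d a) ?_ (Or.inl ?_) <;> rw [Nat.card_Ico] <;> omega
  have hmulJ : ∀ i e, d i ≤ e →
      ∀ f ∈ vanishingSubmodule q (Ico (d i) e) (e - d i), g i * f ∈ J e := by
    intro i e he
    obtain ⟨n, rfl⟩ := Nat.exists_eq_add_of_le he
    rw [Nat.add_sub_cancel_left]
    exact mul_mem_of_vanishing hq hJ (hg i) n
  have hmulW : ∀ i e, d i ≤ e → ∀ f ∈ vanishingSubmodule q (Ico (d i) (e + 1)) (e + 1 - d i),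
      g i * f ∈ linearFormsMul (q e) (J e) := by
    intro i e he
    obtain ⟨n, rfl⟩ := Nat.exists_eq_add_of_le he
    rw [show d i + n + 1 - d i = n + 1 by omega]
    exact fun f hf => mul_mem_linearFormsMul hq (mul_mem_of_vanishing hq hJ (hg i) n) hf
  have hsurj : ∀ e ≥ N, ∀ x ∈ Y (e + 1), ∃ y ∈ Y e, ∃ v : Fin m → MvPolynomial σ k,
      (∀ i, v i ∈ vanishingSubmodule q (Ico (d i) (e + 1)) (e + 1 - d i)) ∧
        x - (X i₀ - C (q e i₀)) * y = ∑ i, g i * v i := by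
    rintro e he _ ⟨h, hh, rfl⟩
    have hint : ∀ i, Interpolates q (Ico (d i) e) (e - d i) := fun i =>
      hq.interpolates (r := 0) (by rw [Nat.card_Ico]; omega) (Or.inr rfl)
    choose u hu hu' using fun i => hint i fun j =>
      if j < N then eval (q j) (h i) / eval (q j) (X i₀ - C (q e i₀)) else 0
    refine ⟨_, ⟨u, fun i => ⟨hu i, fun j hj => ?_⟩, rfl⟩,
      fun i => h i - (X i₀ - C (q e i₀)) * u i, fun i => ⟨?_, fun j hj => ?_⟩, ?_⟩
    · rw [Finset.mem_Ico] at hj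
      rw [hu' i j (Finset.mem_Ico.2 ⟨(hdN i).trans hj.1, hj.2⟩), if_neg (by omega)]
    · have := hdN i
      exact (totalDegree_sub _ _).trans (max_le (hh i).1
        (totalDegree_mul_le_of_le (totalDegree_X_sub_C_le _ _) (hu i) (by omega)))
    · rw [Finset.mem_Ico] at hj
      rw [map_sub, map_mul]
      rcases lt_or_ge j N with hjN | hjN
      · rw [hu' i j (Finset.mem_Ico.2 ⟨hj.1, by omega⟩), if_pos hjN,
          mul_div_cancel₀ _ (hq.eval_X_sub_C_ne_zero (by omega)), sub_self]
      · rw [(hh i).2 j (Finset.mem_Ico.2 ⟨hjN, hj.2⟩)]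
        rcases (Nat.lt_succ_iff.1 hj.2).eq_or_lt with rfl | hje
        · simp
        · rw [hu' i j (Finset.mem_Ico.2 ⟨hj.1, hje⟩), if_neg (by omega)]
          simp
    · rw [Finset.mul_sum, ← Finset.sum_sub_distrib]
      exact Finset.sum_congr rfl fun i _ => by ring
  obtain ⟨D, hD⟩ := eventually_mem_of_map_mem Y J
    (fun e => LinearMap.mulLeft k (X i₀ - C (q e i₀))) N
    (fun e f hf => hJ e (X_sub_C_mul_mem_linearFormsMul _ i₀ hf))
    (fun e he x hx => by
      obtain ⟨y, hy, v, hv, hxy⟩ := hsurj e he x hx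
      refine ⟨y, hy, ?_⟩
      rw [LinearMap.mulLeft_apply, hxy]
      exact sum_mem fun i _ => hmulJ i (e + 1) ((hdN i).trans (by omega)) _ (hv i))
  refine ⟨D + (5 * N + 1), fun e he f hf => ?_⟩
  obtain ⟨y, hy, v, hv, hxy⟩ := hsurj e (by omega) f (hJY (e + 1) (by omega) hf)
  rw [sub_eq_iff_eq_add] at hxy
  have hyJ : y ∈ J e := by
    refine hD e (by omega) y hy ?_
    rw [LinearMap.mulLeft_apply, ← sub_eq_of_eq_add' hxy]
    exact sub_mem hf (sum_mem fun i _ => hmulJ i (e + 1) ((hdN i).trans (by omega)) _ (hv i))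
  rw [hxy]
  exact add_mem (sum_mem fun i _ => hmulW i e ((hdN i).trans (by omega)) _ (hv i))
    (X_sub_C_mul_mem_linearFormsMul _ i₀ hyJ)

end Core

section Symbols

variable {k σ : Type*} [Field k] [Fintype σ]

/-- The polynomials that arise as coefficients of the products of `d` generators. -/
def symbolSpace (q : ℕ → σ → k) : ℕ → Submodule k (MvPolynomial σ k)
  | 0 => Submodule.span k {1}
  | d + 1 => linearFormsMul (q d) (symbolSpace q d)

lemma symbolSpace_le_vanishingSubmodule (q : ℕ → σ → k) (d : ℕ) :
    symbolSpace q d ≤ vanishingSubmodule q (range d) d := by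
  induction d with
  | zero =>
    rw [symbolSpace, Submodule.span_singleton_le_iff_mem]
    exact ⟨by simp, by simp⟩
  | succ d ih =>
    rintro _ ⟨h, hh, rfl⟩
    refine ⟨totalDegree_sum_le_of_le fun i _ => totalDegree_mul_le_of_le
      (totalDegree_X_sub_C_le _ _) (ih (hh i)).1 (by omega), fun j hj => ?_⟩
    rw [map_sum]
    refine Finset.sum_eq_zero fun i _ => ?_
    rw [map_mul]
    rcases (Nat.lt_succ_iff.1 (Finset.mem_range.1 hj)).eq_or_lt with rfl | hjd
    · simp
    · rw [(ih (hh i)).2 j (Finset.mem_range.2 hjd), mul_zero]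

instance (q : ℕ → σ → k) (d : ℕ) : FiniteDimensional k (symbolSpace q d) :=
  finiteDimensional_of_totalDegree_le fun _ hf => (symbolSpace_le_vanishingSubmodule q d hf).1

variable {B : Type*} [Ring B] [Algebra k B] (q : ℕ → σ → k) (Φ : ℕ → MvPolynomial σ k →ₗ[k] B)

/-- The sums of elements of degree less than `d`. -/
def symbolFiltration : ℕ → Submodule k B
  | 0 => ⊥
  | d + 1 => symbolFiltration d ⊔ (symbolSpace q d).map (Φ d)

instance (d : ℕ) : FiniteDimensional k (symbolFiltration q Φ d) := by
  induction d with
  | zero => rw [symbolFiltration]; infer_instance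
  | succ d ih => rw [symbolFiltration]; infer_instance

lemma symbolFiltration_mono : Monotone (symbolFiltration q Φ) :=
  monotone_nat_of_le_succ fun _ => le_sup_left

variable {q Φ} {w : σ → B} {u : ℕ → σ → k}

lemma mul_mem_symbolFiltration
    (hw : ∀ d i f, w i * Φ d f = u d i • Φ (d + 1) ((X i - C (q d i)) * f)) (i : σ) (d : ℕ) :
    ∀ b ∈ symbolFiltration q Φ d, w i * b ∈ symbolFiltration q Φ (d + 1) := by
  induction d with
  | zero =>
    intro b hb
    rw [symbolFiltration, Submodule.mem_bot] at hb
    simp [hb]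
  | succ d ih =>
    intro b hb
    obtain ⟨c, hc, _, ⟨f, hf, rfl⟩, rfl⟩ := Submodule.mem_sup.1 hb
    rw [mul_add, hw]
    exact Submodule.add_mem_sup (ih c hc) (Submodule.smul_mem _ _
      (Submodule.mem_map_of_mem (X_sub_C_mul_mem_linearFormsMul _ i hf)))

lemma exists_mem_symbolFiltration (h₁ : Φ 0 1 = 1)
    (hw : ∀ d i f, w i * Φ d f = u d i • Φ (d + 1) ((X i - C (q d i)) * f))
    {a : B} (ha : a ∈ Algebra.adjoin k (Set.range w)) : ∃ d, a ∈ symbolFiltration q Φ d := by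
  suffices h : ∀ b, (∃ d, b ∈ symbolFiltration q Φ d) → ∃ d, a * b ∈ symbolFiltration q Φ d by
    rw [← mul_one a]
    refine h 1 ⟨1, ?_⟩
    rw [← h₁]
    exact Submodule.mem_sup_right (Submodule.mem_map_of_mem (Submodule.mem_span_singleton_self 1))
  induction ha using Algebra.adjoin_induction with
  | mem x hx =>
    obtain ⟨i, rfl⟩ := hx
    rintro b ⟨d, hb⟩
    exact ⟨d + 1, mul_mem_symbolFiltration hw i d b hb⟩
  | algebraMap r =>
    rintro b ⟨d, hb⟩
    exact ⟨d, by rw [← Algebra.smul_def]; exact Submodule.smul_mem _ _ hb⟩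
  | add x y _ _ hx hy =>
    intro b hb
    obtain ⟨d, hd⟩ := hx b hb
    obtain ⟨e, he⟩ := hy b hb
    refine ⟨max d e, ?_⟩
    rw [add_mul]
    exact add_mem (symbolFiltration_mono q Φ (le_max_left _ _) hd)
      (symbolFiltration_mono q Φ (le_max_right _ _) he)
  | mul x y _ _ hx hy =>
    intro b hb
    rw [mul_assoc]
    exact hx _ (hy b hb)

/-- The leading coefficients of the elements of degree `d` of `I`. -/
def leadingSymbols (q : ℕ → σ → k) (Φ : ℕ → MvPolynomial σ k →ₗ[k] B) (I : Submodule k B) (d : ℕ) :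
    Submodule k (MvPolynomial σ k) where
  carrier := {f | f ∈ symbolSpace q d ∧ ∃ a ∈ I, a - Φ d f ∈ symbolFiltration q Φ d}
  add_mem' := by
    rintro f g ⟨hf, a, ha, haf⟩ ⟨hg, b, hb, hbg⟩
    refine ⟨add_mem hf hg, a + b, add_mem ha hb, ?_⟩
    rw [map_add, add_sub_add_comm]
    exact add_mem haf hbg
  zero_mem' := ⟨zero_mem _, 0, zero_mem _, by simp⟩
  smul_mem' := by
    rintro c f ⟨hf, a, ha, haf⟩
    refine ⟨Submodule.smul_mem _ _ hf, c • a, Submodule.smul_mem _ _ ha, ?_⟩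
    rw [map_smul, ← smul_sub]
    exact Submodule.smul_mem _ _ haf

lemma linearFormsMul_leadingSymbols_le (hu : ∀ d i, u d i ≠ 0)
    (hw : ∀ d i f, w i * Φ d f = u d i • Φ (d + 1) ((X i - C (q d i)) * f))
    {I : Submodule k B} (hI : ∀ i, ∀ a ∈ I, w i * a ∈ I) (d : ℕ) :
    linearFormsMul (q d) (leadingSymbols q Φ I d) ≤ leadingSymbols q Φ I (d + 1) := by
  rintro _ ⟨h, hh, rfl⟩
  refine sum_mem fun i _ => ?_
  obtain ⟨hR, a, ha, haf⟩ := hh i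
  refine ⟨X_sub_C_mul_mem_linearFormsMul _ i hR, (u d i)⁻¹ • (w i * a),
    Submodule.smul_mem _ _ (hI i a ha), ?_⟩
  have := mul_mem_symbolFiltration hw i d _ haf
  rw [mul_sub, hw] at this
  have h2 := Submodule.smul_mem _ (u d i)⁻¹ this
  rwa [smul_sub, inv_smul_smul₀ (hu d i)] at h2

lemma exists_finite_generation {i₀ i₁ : σ} (hq : NoThreeCollinear q i₀ i₁)
    (hcrit : ∀ f : MvPolynomial σ k, f ≠ 0 → ∃ N, ∀ n ≥ N, eval (q n) f ≠ 0)
    (hu : ∀ d i, u d i ≠ 0)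
    (hw : ∀ d i f, w i * Φ d f = u d i • Φ (d + 1) ((X i - C (q d i)) * f))
    {I : Submodule k B} (hI : ∀ i, ∀ a ∈ I, w i * a ∈ I) :
    ∃ D, ∀ G : Submodule k B, (∀ i, ∀ a ∈ G, w i * a ∈ G) → I ⊓ symbolFiltration q Φ D ≤ G →
      ∀ d, I ⊓ symbolFiltration q Φ d ≤ G := by
  obtain ⟨D, hD⟩ := exists_forall_le_linearFormsMul hq hcrit (leadingSymbols q Φ I)
    (fun d f hf => symbolSpace_le_vanishingSubmodule q d hf.1)
    (linearFormsMul_leadingSymbols_le hu hw hI)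
  refine ⟨D + 1, fun G hG hDG d => ?_⟩
  rcases le_total d (D + 1) with hd | hd
  · exact (inf_le_inf_left _ (symbolFiltration_mono q Φ hd)).trans hDG
  induction d, hd using Nat.le_induction with
  | base => exact hDG
  | succ d hd ih =>
    obtain ⟨d, rfl⟩ : ∃ n, d = n + 1 := ⟨d - 1, by omega⟩
    rintro a ⟨haI, ha⟩
    obtain ⟨b, hb, _, ⟨f, hf, rfl⟩, rfl⟩ := Submodule.mem_sup.1 ha
    obtain ⟨h, hh, rfl⟩ := hD d (by omega)
      (show f ∈ leadingSymbols q Φ I (d + 1) from ⟨hf, _, haI, by simpa using hb⟩)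
    choose hR c hcI hc using hh
    have hcF : ∀ i, c i ∈ symbolFiltration q Φ (d + 1) := fun i => by
      rw [← sub_add_cancel (c i) (Φ d (h i))]
      exact Submodule.add_mem_sup (hc i) (Submodule.mem_map_of_mem (hR i))
    have hs : ∑ i, (u d i)⁻¹ • (w i * c i) ∈ G := sum_mem fun i _ =>
      Submodule.smul_mem _ _ (hG i _ (ih ⟨hcI i, hcF i⟩))
    rw [← sub_add_cancel (b + _) (∑ i, (u d i)⁻¹ • (w i * c i))]
    refine add_mem (ih ⟨sub_mem haI (sum_mem fun i _ =>
      Submodule.smul_mem _ _ (hI i _ (hcI i))), ?_⟩) hs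
    rw [map_sum, add_sub_assoc, ← Finset.sum_sub_distrib]
    refine add_mem hb (sum_mem fun i _ => ?_)
    have := Submodule.smul_mem _ (-(u d i)⁻¹) (mul_mem_symbolFiltration hw i d _ (hc i))
    rwa [mul_sub, hw, neg_smul, smul_sub, inv_smul_smul₀ (hu d i), neg_sub] at this

/-- The noetherianity criterion applied to both sides of the algebra of Eulerian derivatives:
left multiplication by a generator is, on coefficients, multiplication by a linear form
vanishing at `q d`. -/
theorem isNoetherianRing_adjoin {i₀ i₁ : σ} (hq : NoThreeCollinear q i₀ i₁)
    (hcrit : ∀ f : MvPolynomial σ k, f ≠ 0 → ∃ N, ∀ n ≥ N, eval (q n) f ≠ 0)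
    (hu : ∀ d i, u d i ≠ 0) (h₁ : Φ 0 1 = 1)
    (hw : ∀ d i f, w i * Φ d f = u d i • Φ (d + 1) ((X i - C (q d i)) * f)) :
    IsNoetherianRing (Algebra.adjoin k (Set.range w)) := by
  set S := Algebra.adjoin k (Set.range w)
  have hwS : ∀ i, w i ∈ S := fun i => Algebra.subset_adjoin ⟨i, rfl⟩
  have closed : ∀ (K : Ideal S) (i : σ),
      ∀ a ∈ (K.restrictScalars k).map S.val.toLinearMap,
        w i * a ∈ (K.restrictScalars k).map S.val.toLinearMap := by
    rintro K i _ ⟨a, ha, rfl⟩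
    exact ⟨⟨w i, hwS i⟩ * a, K.mul_mem_left _ ha, rfl⟩
  refine isNoetherianRing_iff_ideal_fg S |>.2 fun I => ?_
  obtain ⟨D, hD⟩ := exists_finite_generation hq hcrit hu hw (closed I)
  set I₀ := I.restrictScalars k ⊓ (symbolFiltration q Φ D).comap S.val.toLinearMap
  have hfin : FiniteDimensional k I₀ := by
    refine FiniteDimensional.of_injective
      ((S.val.toLinearMap.domRestrict I₀).codRestrict (symbolFiltration q Φ D) fun x => x.2.2)
      fun x y hxy => Subtype.ext (Subtype.ext (Subtype.ext_iff.1 hxy :))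
  obtain ⟨T, hT⟩ := (Module.Finite.iff_fg (N := I₀)).1 hfin
  refine ⟨T, le_antisymm (Submodule.span_le.2 fun x hx => ?_) fun x hx => ?_⟩
  · have : x ∈ I₀ := hT ▸ Submodule.subset_span hx
    exact this.1
  · obtain ⟨d, hd⟩ := exists_mem_symbolFiltration h₁ hw x.2
    have hle : (I.restrictScalars k).map S.val.toLinearMap ⊓ symbolFiltration q Φ D ≤
        (Submodule.restrictScalars k (Ideal.span (T : Set S))).map S.val.toLinearMap := by
      rintro _ ⟨⟨y, hy, rfl⟩, hyD⟩
      have : y ∈ I₀ := ⟨hy, hyD⟩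
      rw [← hT] at this
      exact ⟨y, Submodule.span_le_restrictScalars k S _ this, rfl⟩
    obtain ⟨y, hy, hyx⟩ := hD _ (closed _) hle d ⟨⟨x, hx, rfl⟩, hd⟩
    exact Subtype.ext hyx ▸ hy

end Symbols

section AlgebraicIndependence

variable {F k σ : Type*} [Field F] [Field k] [Algebra F k] {p : σ → k}

lemma algebraicIndependent_inv (hp : AlgebraicIndependent F p) :
    AlgebraicIndependent F fun i => (p i)⁻¹ := by
  classical
  rw [algebraicIndependent_iff]
  intro f hf
  by_contra hne
  have hp0 : ∀ i, p i ≠ 0 := fun i => hp.ne_zero i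
  set M : σ →₀ ℕ := f.support.sup id
  have hM : ∀ m ∈ f.support, m ≤ M := fun m hm => Finset.le_sup (f := id) hm
  set g : MvPolynomial σ F := ∑ m ∈ f.support, monomial (M - m) (coeff m f) with hg
  have hgp : aeval p g = 0 := by
    have h1 : aeval p g = (M.prod fun i e => p i ^ e) * aeval (fun i => (p i)⁻¹) f := by
      rw [aeval_def (p := f), eval₂_eq, Finset.mul_sum, hg, map_sum]
      refine Finset.sum_congr rfl fun m hm => ?_
      rw [aeval_monomial, mul_left_comm]
      congr 1
      have h2 : (M.prod fun i e => p i ^ e)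
          = ((M - m).prod fun i e => p i ^ e) * m.prod fun i e => p i ^ e := by
        rw [← Finsupp.prod_add_index' (by simp) (by intros; rw [pow_add]),
          tsub_add_cancel_of_le (hM m hm)]
      rw [h2, mul_assoc]
      have h3 : (m.prod fun i e => p i ^ e) * ∏ i ∈ m.support, (p i)⁻¹ ^ m i = 1 := by
        rw [Finsupp.prod, ← Finset.prod_mul_distrib]
        exact Finset.prod_eq_one fun i _ => by rw [← mul_pow, mul_inv_cancel₀ (hp0 i), one_pow]
      rw [h3, mul_one]
    rw [h1, hf, mul_zero]
  have hg0 : g = 0 := algebraicIndependent_iff.1 hp g hgp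
  obtain ⟨m, hm⟩ := Finset.nonempty_of_ne_empty (mt support_eq_empty.1 hne)
  have h4 : coeff (M - m) g = coeff m f := by
    rw [hg, coeff_sum, Finset.sum_eq_single_of_mem m hm, coeff_monomial, if_pos rfl]
    intro m' hm' hne'
    rw [coeff_monomial, if_neg]
    intro e
    exact hne' ((tsub_right_inj (hM m' hm') (hM m hm)).1 e)
  rw [hg0, coeff_zero] at h4
  exact mem_support_iff.1 hm h4.symm

lemma sum_monomial_nsmul_mul_ne_zero {R : Type*} [CommRing R] (s : Finset (σ →₀ ℕ))
    (r : (σ →₀ ℕ) → MvPolynomial σ R) {m₀ : σ →₀ ℕ} (hm₀ : m₀ ∈ s) (hr : r m₀ ≠ 0) {n : ℕ}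
    (hn : ∀ m ∈ s, (r m).totalDegree < n) :
    ∑ m ∈ s, monomial (n • m) 1 * r m ≠ 0 := by
  classical
  obtain ⟨e₀, he₀⟩ := Finset.nonempty_of_ne_empty (mt support_eq_empty.1 hr)
  have hlt : ∀ m ∈ s, ∀ e ∈ (r m).support, ∀ i, e i < n := fun m hm e he i =>
    ((Finsupp.le_degree i e).trans (le_totalDegree he)).trans_lt (hn m hm)
  intro h
  have h1 := congrArg (coeff (n • m₀ + e₀)) h
  rw [coeff_sum, coeff_zero, Finset.sum_eq_single_of_mem m₀ hm₀, coeff_monomial_mul, one_mul] at h1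
  · exact mem_support_iff.1 he₀ h1
  · intro m hm hne
    rw [coeff_monomial_mul']
    split_ifs with hle
    · rw [one_mul]
      by_contra hc
      refine hne ?_
      have he := hlt m hm _ (mem_support_iff.2 hc)
      ext i
      have h2 := he i
      have h3 := hlt m₀ hm₀ e₀ he₀ i
      have h4 := hle i
      simp only [Finsupp.coe_tsub, Finsupp.coe_add, Finsupp.coe_smul, Pi.sub_apply, Pi.add_apply,
        Pi.smul_apply, smul_eq_mul] at h2 h4
      have h5 : n * m i + (n * m₀ i + e₀ i - n * m i) = n * m₀ i + e₀ i := by omega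
      have hnpos : 0 < n := by omega
      have h6 := congrArg (· / n) h5
      simpa [Nat.mul_add_div hnpos, Nat.div_eq_of_lt h2, Nat.div_eq_of_lt h3] using h6
    · rfl

/-- The powers of a point with algebraically independent coordinates are critically dense. -/
lemma exists_forall_eval_pow_ne_zero (hp : AlgebraicIndependent F p) (f : MvPolynomial σ k)
    (hf : f ≠ 0) : ∃ N, ∀ n ≥ N, eval (fun i => p i ^ n) f ≠ 0 := by
  classical
  let R := MvPolynomial σ F
  let : Algebra R k := (aeval p).toAlgebra
  have hinj : Function.Injective (algebraMap R k) := hp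
  have : FaithfulSMul R k := (faithfulSMul_iff_algebraMap_injective R k).2 hinj
  let := FractionRing.liftAlgebra R k
  have := FractionRing.isScalarTower_liftAlgebra R k
  obtain ⟨m₀, hm₀⟩ := Finset.nonempty_of_ne_empty (mt support_eq_empty.1 hf)
  obtain ⟨l, hl⟩ : ∃ l : Module.Dual (FractionRing R) k, l (coeff m₀ f) ≠ 0 := by
    by_contra! h
    exact mem_support_iff.1 hm₀ ((Module.forall_dual_apply_eq_zero_iff (FractionRing R) _).1 h)
  obtain ⟨b, hb⟩ := IsLocalization.exist_integer_multiples (nonZeroDivisors R) f.support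
    fun m => l (coeff m f)
  choose! r hr using hb
  refine ⟨f.support.sup (fun m => (r m).totalDegree) + 1, fun n hn h0 => ?_⟩
  refine sum_monomial_nsmul_mul_ne_zero f.support r hm₀ ?_ (n := n) ?_ ?_
  · intro h
    have h1 := hr m₀ hm₀
    rw [h, map_zero, eq_comm] at h1
    refine (mul_eq_zero.1 ((Algebra.smul_def _ _).symm.trans h1)).elim
      (fun h2 => nonZeroDivisors.coe_ne_zero b ?_) hl
    exact (map_eq_zero_iff _ (IsFractionRing.injective R (FractionRing R))).1 h2
  · exact fun m hm => (Finset.le_sup (f := fun m => (r m).totalDegree) hm).trans_lt (by omega)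
  · apply IsFractionRing.injective R (FractionRing R)
    rw [map_zero, map_sum]
    have h1 : ∑ m ∈ f.support, (monomial (n • m) 1 : R) • coeff m f = 0 := by
      rw [← h0, eval_eq]
      refine Finset.sum_congr rfl fun m _ => ?_
      rw [Algebra.smul_def, mul_comm]
      congr 1
      change aeval p (monomial (n • m) (1 : F)) = _
      rw [aeval_monomial, map_one, one_mul, Finsupp.prod_of_support_subset _
        (Finsupp.support_smul) _ (by simp)]
      exact Finset.prod_congr rfl fun i _ => by simp [pow_mul]
    have h2 : ∑ m ∈ f.support, (monomial (n • m) 1 : R) • l (coeff m f) = 0 := by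
      rw [← map_zero l, ← h1, map_sum]
      refine Finset.sum_congr rfl fun m _ => ?_
      rw [← algebraMap_smul (FractionRing R), ← algebraMap_smul (FractionRing R) _ (coeff m f),
        map_smul]
    rw [← smul_zero b, ← h2, Finset.smul_sum]
    refine Finset.sum_congr rfl fun m hm => ?_
    rw [map_mul, hr m hm]
    simp only [Submonoid.smul_def, Algebra.smul_def]
    ring

lemma noThreeCollinear_pow (hp : AlgebraicIndependent F p) {i₀ i₁ : σ} (hi : i₀ ≠ i₁) :
    NoThreeCollinear (fun n i => p i ^ n) i₀ i₁ where
  injective a b h := by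
    have h1 : (monomial (Finsupp.single i₀ a) 1 : MvPolynomial σ F)
        = monomial (Finsupp.single i₀ b) 1 := by
      refine hp ?_
      simpa [aeval_monomial] using h
    have h2 := (Finsupp.single_injective i₀) (monomial_left_injective one_ne_zero h1)
    exact h2
  det_ne_zero a b c hab hbc hac h := by
    classical
    let e : ℕ → ℕ → σ →₀ ℕ := fun x y => Finsupp.single i₀ x + Finsupp.single i₁ y
    have he : ∀ x y x' y', e x y = e x' y' ↔ x = x' ∧ y = y' := by
      refine fun x y x' y' => ⟨fun h => ⟨?_, ?_⟩, by rintro ⟨rfl, rfl⟩; rfl⟩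
      · simpa [e, hi, hi.symm] using DFunLike.congr_fun h i₀
      · simpa [e, hi, hi.symm] using DFunLike.congr_fun h i₁
    let M : ℕ → ℕ → MvPolynomial σ F := fun x y => monomial (e x y) 1
    have hM : ∀ x y, aeval p (M x y) = p i₀ ^ x * p i₁ ^ y := by
      intro x y
      have : M x y = X i₀ ^ x * X i₁ ^ y := by
        simp only [M, e, X_pow_eq_monomial, monomial_mul, mul_one]
      simp [this]
    have h1 : M b c - M b a - M a c - M c b + M c a + M a b = 0 := by
      refine hp ?_
      simp only [map_add, map_sub, map_zero, hM]
      linear_combination h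
    have h2 := congrArg (coeff (e b c)) h1
    simp [M, coeff_monomial, he, hab, hac, hbc, hbc.symm] at h2

lemma NoThreeCollinear.comp {q : ℕ → σ → k} {i₀ i₁ : σ} (hq : NoThreeCollinear q i₀ i₁)
    {s : ℕ → ℕ} (hs : Function.Injective s) : NoThreeCollinear (fun n => q (s n)) i₀ i₁ where
  injective := hq.injective.comp hs
  det_ne_zero _ _ _ hab hbc hac := hq.det_ne_zero _ _ _ (hs.ne hab) (hs.ne hbc) (hs.ne hac)

end AlgebraicIndependence

section Operators

variable {k σ : Type*} [Field k]

open LaurentPolynomial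

/-- The monomial basis of the Laurent polynomials. -/
def laurentBasis (k : Type*) [Field k] : Module.Basis ℤ k k[T;T⁻¹] :=
  AddMonoidAlgebra.basis ℤ k

lemma laurentBasis_apply (n : ℤ) : laurentBasis k n = T n :=
  rfl

lemma LaurentPolynomial.hom_ext_T {M : Type*} [AddCommGroup M] [Module k M]
    {A B : k[T;T⁻¹] →ₗ[k] M} (h : ∀ n : ℤ, A (T n) = B (T n)) : A = B :=
  (laurentBasis k).ext fun n => by simpa only [laurentBasis_apply] using h n

/-- The homogeneous operator of degree `-d` whose coefficients are the values of a polynomial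
at the points `c n`. -/
def evalShift (c : ℤ → σ → k) (d : ℤ) : MvPolynomial σ k →ₗ[k] Module.End k k[T;T⁻¹] :=
  ((laurentBasis k).constr k).toLinearMap ∘ₗ
    LinearMap.pi fun n => (aeval (c n)).toLinearMap.smulRight (T (n - d))

lemma evalShift_apply (c : ℤ → σ → k) (d : ℤ) (f : MvPolynomial σ k) (n : ℤ) :
    evalShift c d f (T n) = eval (c n) f • T (n - d) := by
  rw [← laurentBasis_apply n, evalShift, LinearMap.comp_apply, LinearEquiv.coe_toLinearMap,
    Module.Basis.constr_basis]
  simp [aeval_eq_eval]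

lemma evalShift_zero_one (c : ℤ → σ → k) : evalShift c 0 1 = 1 :=
  hom_ext_T fun n => by simp [evalShift_apply]

/-- The Eulerian derivative with parameter `p`, on monomials. -/
def IsEulerianDerivative (p : k) (A : Module.End k k[T;T⁻¹]) : Prop :=
  ∀ n : ℤ, A (T n) = ((p ^ n - 1) / (p - 1)) • T (n - 1)

variable {p : σ → k} {D : σ → Module.End k k[T;T⁻¹]}

lemma IsEulerianDerivative.mul_evalShift {i : σ} (hD : IsEulerianDerivative (p i) (D i))
    (hp : p i ≠ 0) (d : ℕ) (f : MvPolynomial σ k) :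
    D i * evalShift (fun n i => p i ^ n) d f = ((p i ^ d)⁻¹ / (p i - 1)) •
      evalShift (fun n i => p i ^ n) (d + 1 : ℕ) ((X i - MvPolynomial.C (p i ^ d)) * f) := by
  refine hom_ext_T fun n => ?_
  rw [Module.End.mul_apply, evalShift_apply, map_smul, hD, LinearMap.smul_apply, evalShift_apply,
    smul_smul, smul_smul, Nat.cast_succ, sub_sub]
  congr 1
  simp only [map_mul, map_sub, eval_X, eval_C]
  rw [zpow_sub₀ hp, zpow_natCast]
  field_simp

lemma IsEulerianDerivative.evalShift_mul {i : σ} (hD : IsEulerianDerivative (p i) (D i))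
    (hp : p i ≠ 0) (d : ℕ) (f : MvPolynomial σ k) :
    evalShift (fun n i => p i ^ (n - d)) d f * D i = (p i ^ (d + 1) / (p i - 1)) •
      evalShift (fun n i => p i ^ (n - (d + 1 : ℕ))) (d + 1 : ℕ)
        ((X i - MvPolynomial.C ((p i)⁻¹ ^ (d + 1))) * f) := by
  refine hom_ext_T fun n => ?_
  rw [Module.End.mul_apply, hD, map_smul, evalShift_apply, LinearMap.smul_apply, evalShift_apply,
    smul_smul, smul_smul, Nat.cast_succ, sub_sub, add_comm (1 : ℤ)]
  congr 1
  simp only [map_mul, map_sub, eval_X, eval_C]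
  rw [zpow_sub₀ hp n, zpow_add_one₀ hp, zpow_natCast, inv_pow, pow_succ]
  field_simp

variable {F : Type*} [Field F] [Algebra F k]

lemma AlgebraicIndependent.ne_one (hp : AlgebraicIndependent F p) (i : σ) : p i ≠ 1 := by
  intro h
  have h1 : (X i : MvPolynomial σ F) = 1 := hp (by simpa using h)
  simpa using congrArg (eval 0) h1

variable [Fintype σ]

/-- The algebra of Eulerian derivatives with independent parameters is left noetherian. -/
theorem isNoetherianRing_adjoin_eulerian (hp : AlgebraicIndependent F p) {i₀ i₁ : σ}
    (hi : i₀ ≠ i₁) (hD : ∀ i, IsEulerianDerivative (p i) (D i)) :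
    IsNoetherianRing (Algebra.adjoin k (Set.range D)) := by
  have hp0 : ∀ i, p i ≠ 0 := fun i => hp.ne_zero i
  exact isNoetherianRing_adjoin (q := fun n i => p i ^ n)
    (Φ := fun d => evalShift (fun n i => p i ^ n) d)
    (u := fun d i => (p i ^ d)⁻¹ / (p i - 1)) (noThreeCollinear_pow hp hi)
    (exists_forall_eval_pow_ne_zero hp)
    (fun d i => div_ne_zero (inv_ne_zero (pow_ne_zero d (hp0 i))) (sub_ne_zero.2 (hp.ne_one i)))
    (evalShift_zero_one _) fun d i f => (hD i).mul_evalShift (hp0 i) d f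

/-- The algebra of Eulerian derivatives with independent parameters is right noetherian. -/
theorem isNoetherianRing_mulOpposite_adjoin_eulerian (hp : AlgebraicIndependent F p) {i₀ i₁ : σ}
    (hi : i₀ ≠ i₁) (hD : ∀ i, IsEulerianDerivative (p i) (D i)) :
    IsNoetherianRing (Algebra.adjoin k (Set.range D))ᵐᵒᵖ := by
  have hp0 : ∀ i, p i ≠ 0 := fun i => hp.ne_zero i
  have hp' := algebraicIndependent_inv hp
  have h : IsNoetherianRing
      (Algebra.adjoin k (Set.range fun i => MulOpposite.op (D i))) := by
    refine isNoetherianRing_adjoin (q := fun n i => (p i)⁻¹ ^ (n + 1))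
      (Φ := fun d => (MulOpposite.opLinearEquiv k).toLinearMap ∘ₗ
        evalShift (fun n i => p i ^ (n - d)) d)
      (u := fun d i => p i ^ (d + 1) / (p i - 1))
      ((noThreeCollinear_pow hp' hi).comp (add_left_injective 1)) (fun f hf => ?_)
      (fun d i => div_ne_zero (pow_ne_zero _ (hp0 i)) (sub_ne_zero.2 (hp.ne_one i)))
      (congrArg MulOpposite.op (evalShift_zero_one _))
      fun d i f => congrArg MulOpposite.op ((hD i).evalShift_mul (hp0 i) d f)
    obtain ⟨N, hN⟩ := exists_forall_eval_pow_ne_zero hp' f hf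
    exact ⟨N, fun n hn => hN (n + 1) (by omega)⟩
  have h_range : MulOpposite.unop ⁻¹' Set.range D = Set.range fun i => MulOpposite.op (D i) := by
    ext x
    simp [← MulOpposite.unop_inj]
  rw [← h_range, ← Subalgebra.op_adjoin] at h
  exact isNoetherianRing_of_ringEquiv _
    (Subalgebra.mopAlgEquivOp (Algebra.adjoin k (Set.range D))).symm.toRingEquiv

end Operators

end NoetherianEulerian

/-- if `p₁, …, p_t` (`t ≥ 2`) are algebraically independent over the prime
subfield of the algebraically closed field `k`, then the `k`-subalgebra of
`End_k(k[Y,Y⁻¹])` generated by the Eulerian derivatives `D_{p₁}, …, D_{p_t}` is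
left and right noetherian. -/
theorem stmt_0 {k : Type*} [Field k] [IsAlgClosed k]
    (t : ℕ) (ht : 2 ≤ t) (p : Fin t → k)
    (hp : AlgebraicIndependent (⊥ : Subfield k) p)
    (D : Fin t → Module.End k (LaurentPolynomial k))
    (hD : ∀ i, ∀ n : ℤ, D i (LaurentPolynomial.T n)
        = ((p i ^ n - 1) / (p i - 1)) • LaurentPolynomial.T (n - 1)) :
    IsNoetherianRing (Algebra.adjoin k (Set.range D)) ∧
      IsNoetherianRing (↥(Algebra.adjoin k (Set.range D)))ᵐᵒᵖ := by
  have h : (⟨0, by omega⟩ : Fin t) ≠ ⟨1, by omega⟩ := by simp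
  exact ⟨isNoetherianRing_adjoin_eulerian hp h hD,
    isNoetherianRing_mulOpposite_adjoin_eulerian hp h hD⟩
end
end

section
/- Let t ≥ 2 and let p_1, …, p_t ∈ k^× generate a free abelian subgroup of k^× of rank t (in particular the p_i are distinct and none equals 0 or 1). Let A be the k-subalgebra of End_k(k[Y,Y⁻¹]) generated by D_{p_1}, …, D_{p_t}. Then: (i) A is left noetherian if and only if for every nonzero homogeneous polynomial F ∈ k[x_0,…,x_t] the set {i ∈ ℕ : F(1, p_1^i, …, p_t^i) = 0} is finite; (ii) A is right noetherian if and only if for every nonzero homogeneous F the set {i ∈ ℤ : i ≤ −1 and F(1, p_1^i, …, p_t^i) = 0} is finite; (iii) A is noetherian if and only if for every nonzero homogeneous F the set {i ∈ ℤ : F(1, p_1^i, …, p_t^i) = 0} is finite. -/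
set_option synthInstance.maxHeartbeats 1000000
set_option maxHeartbeats 4000000
set_option maxSynthPendingDepth 3

noncomputable section

namespace EulerianDerivative

open MvPolynomial

section Graded

variable {k σ : Type*} [Field k]

theorem homogeneousComponent_mul_of_isHomogeneous {f : MvPolynomial σ k} {n m : ℕ}
    (hf : f.IsHomogeneous n) (h : n ≤ m) (g : MvPolynomial σ k) :
    homogeneousComponent m (g * f) = homogeneousComponent (m - n) g * f := by
  let := MvPolynomial.gradedAlgebra (σ := σ) (R := k)
  have h1 := DirectSum.coe_decompose_mul_of_right_mem_of_le (homogeneousSubmodule σ k)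
    (a := g) (b := f) (i := n) (n := m) hf h
  have h2 : ∀ (φ : MvPolynomial σ k) (i : ℕ),
      ((DirectSum.decompose (homogeneousSubmodule σ k) φ) i : MvPolynomial σ k)
        = homogeneousComponent i φ := fun φ i => decomposition.decompose'_apply φ i
  rwa [h2, h2] at h1

/-- A homogeneous element of an ideal generated by homogeneous elements is a combination of the
generators with homogeneous coefficients. -/
theorem exists_isHomogeneous_of_mem_span {ι : Type*} [Fintype ι] {f : ι → MvPolynomial σ k}
    {n : ι → ℕ} (hf : ∀ i, (f i).IsHomogeneous (n i)) {m : ℕ} (hn : ∀ i, n i ≤ m)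
    {φ : MvPolynomial σ k} (hφ : φ.IsHomogeneous m) (hmem : φ ∈ Ideal.span (Set.range f)) :
    ∃ g : ι → MvPolynomial σ k, (∀ i, (g i).IsHomogeneous (m - n i)) ∧ ∑ i, g i * f i = φ := by
  obtain ⟨g, hg⟩ := (Ideal.mem_span_range_iff_exists_fun).1 hmem
  refine ⟨fun i => homogeneousComponent (m - n i) (g i),
    fun i => homogeneousComponent_isHomogeneous _ _, ?_⟩
  rw [← homogeneousComponent_eq_self hφ, ← hg, map_sum]
  exact Finset.sum_congr rfl fun i _ =>
    (homogeneousComponent_mul_of_isHomogeneous (hf i) (hn i) (g i)).symm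

theorem aeval_C_mul_X_of_isHomogeneous {φ : MvPolynomial σ k} {m : ℕ} (hφ : φ.IsHomogeneous m)
    (q : σ → k) (o : σ) :
    aeval (fun j => C (q j) * X o : σ → MvPolynomial σ k) φ = C (eval q φ) * X o ^ m := by
  rw [aeval_def, eval₂_eq, eval_eq, map_sum, Finset.sum_mul]
  refine Finset.sum_congr rfl fun d hd => ?_
  have hdeg : d.degree = m := by
    by_contra hne
    exact (mem_support_iff.1 hd) (hφ.coeff_eq_zero hne)
  have h1 : ∏ i ∈ d.support, (X o : MvPolynomial σ k) ^ d i = X o ^ m := by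
    rw [Finset.prod_pow_eq_pow_sum, ← hdeg]; rfl
  simp only [mul_pow, Finset.prod_mul_distrib, h1, algebraMap_eq, map_mul, map_prod, map_pow]
  ring

/-- The linear form `x_j - q_j x_o`, vanishing at `q` when `q_o = 1`. -/
def linForm (q : σ → k) (o j : σ) : MvPolynomial σ k := X j - C (q j) * X o

theorem linForm_isHomogeneous (q : σ → k) (o j : σ) : (linForm q o j).IsHomogeneous 1 :=
  (isHomogeneous_X k j).sub (isHomogeneous_C_mul_X (q j) o)

@[simp]
theorem eval_linForm (q r : σ → k) (o j : σ) : eval r (linForm q o j) = r j - q j * r o := by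
  simp [linForm]

theorem mem_span_linForm {φ : MvPolynomial σ k} {m : ℕ} (hφ : φ.IsHomogeneous m) {q : σ → k}
    (o : σ) (h0 : eval q φ = 0) : φ ∈ Ideal.span (Set.range (linForm q o)) := by
  set I := Ideal.span (Set.range (linForm q o))
  have hX : ∀ j, Ideal.Quotient.mkₐ k I (X j) = Ideal.Quotient.mkₐ k I (C (q j) * X o) := by
    intro j
    refine Ideal.Quotient.eq.2 (Ideal.subset_span ⟨j, rfl⟩)
  have h1 : Ideal.Quotient.mkₐ k I φ
      = Ideal.Quotient.mkₐ k I (aeval (fun j => C (q j) * X o : σ → MvPolynomial σ k) φ) := by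
    have : (Ideal.Quotient.mkₐ k I) = (Ideal.Quotient.mkₐ k I).comp
        (aeval (fun j => C (q j) * X o : σ → MvPolynomial σ k)) := by
      apply MvPolynomial.algHom_ext
      intro j
      simpa using hX j
    exact DFunLike.congr_fun this φ
  rw [aeval_C_mul_X_of_isHomogeneous hφ, h0, map_zero, zero_mul, map_zero] at h1
  exact Ideal.Quotient.eq_zero_iff_mem.1 h1

variable (c : ℕ → σ → k)

/-- Homogeneous polynomials of degree `m` vanishing at the points `c i`, `i ∈ Z`. -/
def vanishing (Z : Finset ℕ) (m : ℕ) : Submodule k (MvPolynomial σ k) where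
  carrier := {f | f.IsHomogeneous m ∧ ∀ i ∈ Z, eval (c i) f = 0}
  add_mem' := fun ha hb => ⟨ha.1.add hb.1, fun i hi => by simp [ha.2 i hi, hb.2 i hi]⟩
  zero_mem' := ⟨isHomogeneous_zero _ _ _, fun i _ => by simp⟩
  smul_mem' := fun r f hf => ⟨(homogeneousSubmodule σ k m).smul_mem r hf.1,
    fun i hi => by simp [smul_eval, hf.2 i hi]⟩

/-- The span of the linear forms vanishing at the `q`-th point. -/
def lin (o : σ) (q : ℕ) : Submodule k (MvPolynomial σ k) :=
  Submodule.span k (Set.range (linForm (c q) o))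

variable {c} {o e : σ}

/-- Homogeneous interpolation along the coordinates `o`, `e`. -/
theorem exists_interpolation (hc : ∀ i, c i o = 1) (he : Function.Injective fun i => c i e)
    (Z : Finset ℕ) {m : ℕ} (hm : Z.card ≤ m + 1) (v : ℕ → k) :
    ∃ h : MvPolynomial σ k, h.IsHomogeneous m ∧ ∀ i ∈ Z, eval (c i) h = v i := by
  classical
  let P : ℕ → MvPolynomial σ k := fun i => ∏ j ∈ Z.erase i, linForm (c j) o e
  have hP : ∀ i, eval (c i) (P i) ≠ 0 := by
    intro i
    simp only [P, map_prod, eval_linForm, hc, mul_one]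
    refine Finset.prod_ne_zero_iff.2 fun j hj => sub_ne_zero.2 fun h => ?_
    exact (Finset.ne_of_mem_erase hj) (he h).symm
  refine ⟨∑ i ∈ Z, C (v i / eval (c i) (P i)) * (P i * X o ^ (m - (Z.card - 1))), ?_, ?_⟩
  · refine IsHomogeneous.sum _ _ _ fun i hi => ?_
    have h1 : (P i).IsHomogeneous (Z.card - 1) := by
      have := IsHomogeneous.prod (Z.erase i) (fun j => linForm (c j) o e) (fun _ => 1)
        fun j _ => linForm_isHomogeneous _ _ _
      simpa [Finset.card_erase_of_mem hi] using this
    have h2 := (h1.mul (isHomogeneous_X_pow (R := k) o (m - (Z.card - 1))))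
    rw [show Z.card - 1 + (m - (Z.card - 1)) = m by omega] at h2
    exact h2.C_mul _
  · intro i hi
    rw [map_sum, Finset.sum_eq_single i]
    · simp [hc, div_mul_cancel₀ _ (hP i)]
    · intro j hj hji
      have : eval (c i) (P j) = 0 := by
        simp only [P, map_prod]
        exact Finset.prod_eq_zero (Finset.mem_erase.2 ⟨hji.symm, hi⟩) (by simp [hc])
      simp [this]
    · exact fun h => absurd hi h

/-- Using the syzygies with a generator `f i₀` that does not vanish on `Z`, the coefficients of a
combination vanishing on `Z` can be chosen to vanish on `Z`. -/
theorem exists_vanishing_coeffs (hc : ∀ i, c i o = 1) (he : Function.Injective fun i => c i e)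
    {ι : Type*} [Fintype ι] {f : ι → MvPolynomial σ k} {n : ι → ℕ}
    (hf : ∀ i, (f i).IsHomogeneous (n i)) (i₀ : ι) {Z : Finset ℕ}
    (hZ : ∀ z ∈ Z, eval (c z) (f i₀) ≠ 0) {m : ℕ} (hm : ∀ i, Z.card + n i + n i₀ ≤ m + 1)
    {g : ι → MvPolynomial σ k} (hg : ∀ i, (g i).IsHomogeneous (m - n i))
    (h0 : ∀ z ∈ Z, eval (c z) (∑ i, g i * f i) = 0) :
    ∃ g' : ι → MvPolynomial σ k, (∀ i, g' i ∈ vanishing c Z (m - n i)) ∧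
      ∑ i, g' i * f i = ∑ i, g i * f i := by
  classical
  rcases Z.eq_empty_or_nonempty with rfl | hne
  · exact ⟨g, fun i => ⟨hg i, by simp⟩, rfl⟩
  have hpos := hne.card_pos
  choose h hh hv using fun i => exists_interpolation hc he Z (m := m - n i - n i₀)
    (by have := hm i; omega) (fun z => eval (c z) (g i) / eval (c z) (f i₀))
  refine ⟨fun i => g i - h i * f i₀ + if i = i₀ then ∑ j, h j * f j else 0, fun i => ⟨?_, ?_⟩, ?_⟩
  · refine ((hg i).sub ?_).add ?_
    · have := (hh i).mul (hf i₀)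
      rwa [show m - n i - n i₀ + n i₀ = m - n i by have := hm i; omega] at this
    · split_ifs with hi
      · subst hi
        refine IsHomogeneous.sum _ _ _ fun j _ => ?_
        have := (hh j).mul (hf j)
        rwa [show m - n j - n i + n j = m - n i by have := hm j; omega] at this
      · exact isHomogeneous_zero _ _ _
  · intro z hz
    have h1 : eval (c z) (∑ j, h j * f j) = 0 := by
      have h2 := h0 z hz
      rw [map_sum] at h2 ⊢
      have h3 : ∑ j, eval (c z) (h j * f j)
          = (∑ j, eval (c z) (g j * f j)) / eval (c z) (f i₀) := by
        rw [Finset.sum_div]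
        refine Finset.sum_congr rfl fun j _ => ?_
        rw [map_mul, hv j z hz, map_mul]; ring
      rw [h3, h2, zero_div]
    rw [map_add, apply_ite (eval (c z)), h1, map_zero, ite_self, add_zero, map_sub, map_mul,
      hv i z hz, div_mul_cancel₀ _ (hZ z hz), sub_self]
  · simp only [add_mul, sub_mul, Finset.sum_add_distrib, Finset.sum_sub_distrib, ite_mul, zero_mul,
      Finset.sum_ite_eq', Finset.mem_univ, if_true, Finset.sum_mul]
    rw [sub_add, sub_eq_self, sub_eq_zero]
    exact Finset.sum_congr rfl fun j _ => by ring

variable [Fintype σ]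

/-- The forms vanishing at `Z ∪ {q}` are generated over linear forms vanishing at `q` by the forms
vanishing at `Z`, in degrees exceeding the number of points of `Z`. -/
theorem vanishing_insert_le (hc : ∀ i, c i o = 1) (he : Function.Injective fun i => c i e)
    {Z : Finset ℕ} {q : ℕ} (hq : q ∉ Z) {m : ℕ} (hm : Z.card ≤ m) :
    vanishing c (insert q Z) (m + 1) ≤ lin c o q * vanishing c Z m := by
  intro φ hφ
  obtain ⟨g, hg, hgφ⟩ := exists_isHomogeneous_of_mem_span (linForm_isHomogeneous (c q) o)
    (m := m + 1) (fun _ => by omega) hφ.1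
    (mem_span_linForm hφ.1 o (hφ.2 q (Finset.mem_insert_self _ _)))
  obtain ⟨g', hg', hgg⟩ := exists_vanishing_coeffs hc he (linForm_isHomogeneous (c q) o) e (Z := Z)
    (fun z hz => by
      simp only [eval_linForm, hc, mul_one]
      exact sub_ne_zero.2 fun h => hq (he h ▸ hz)) (m := m + 1) (fun _ => by omega) hg
    (fun z hz => by rw [hgφ]; exact hφ.2 z (Finset.mem_insert_of_mem hz))
  rw [← hgφ, ← hgg]
  refine Submodule.sum_mem _ fun i _ => ?_
  rw [mul_comm (g' i)]
  exact Submodule.mul_mem_mul (Submodule.subset_span ⟨i, rfl⟩) (hg' i)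

theorem vanishing_mul_le {M : ℕ → Submodule k (MvPolynomial σ k)}
    (hc : ∀ i, c i o = 1) (he : Function.Injective fun i => c i e)
    (hM : ∀ m, lin c o m * M m ≤ M (m + 1)) (a j : ℕ) :
    vanishing c (Finset.Ico a (a + j)) j * M a ≤ M (a + j) := by
  induction j with
  | zero =>
    refine Submodule.mul_le.2 fun f hf g hg => ?_
    have h0 := (totalDegree_zero_iff_isHomogeneous σ).2 hf.1
    rw [totalDegree_eq_zero_iff_eq_C] at h0
    rw [h0, ← smul_eq_C_mul]
    exact Submodule.smul_mem _ _ hg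
  | succ j ih =>
    have h1 : vanishing c (Finset.Ico a (a + (j + 1))) (j + 1)
        ≤ lin c o (a + j) * vanishing c (Finset.Ico a (a + j)) j := by
      rw [← add_assoc, ← Finset.insert_Ico_right_eq_Ico_add_one (by omega)]
      exact vanishing_insert_le hc he (by simp) (by simp)
    calc _ ≤ lin c o (a + j) * vanishing c (Finset.Ico a (a + j)) j * M a :=
          mul_le_mul_left h1 _
      _ = lin c o (a + j) * (vanishing c (Finset.Ico a (a + j)) j * M a) := mul_assoc _ _ _
      _ ≤ lin c o (a + j) * M (a + j) := mul_le_mul_right ih _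
      _ ≤ _ := hM _

theorem exists_forall_ge_eq_of_monotone_of_le {u : ℕ → ℕ} {N B : ℕ}
    (hu : ∀ m ≥ N, u m ≤ u (m + 1)) (hB : ∀ m, u m ≤ B) :
    ∃ N' ≥ N, ∀ m ≥ N', u m = u (m + 1) := by
  have hmono : Monotone fun m => u (N + m) :=
    monotone_nat_of_le_succ fun m => hu (N + m) (by omega)
  have hfin : (Set.range fun m => u (N + m)).Finite :=
    (Set.finite_Iic B).subset (by rintro _ ⟨m, rfl⟩; exact hB _)
  obtain ⟨_, ⟨a, rfl⟩, ha⟩ := Set.exists_max_image _ id hfin ⟨_, 0, rfl⟩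
  refine ⟨N + a, by omega, fun m hm => ?_⟩
  have h1 : ∀ m ≥ N + a, u m = u (N + a) := by
    intro m hm
    obtain ⟨j, rfl⟩ := Nat.exists_eq_add_of_le hm
    refine le_antisymm ?_ ?_
    · rw [add_assoc]; exact ha _ ⟨a + j, rfl⟩
    · rw [add_assoc]; exact hmono (Nat.le_add_right a j)
  rw [h1 m hm, h1 (m + 1) (by omega)]

/-- If the points `c i` are critically dense, a graded family of spaces of forms which is stable
under the linear forms vanishing at `c m` in degree `m` is generated in bounded degree. -/
theorem exists_forall_ge_le_lin_mul (hc : ∀ i, c i o = 1)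
    (he : Function.Injective fun i => c i e)
    (hdense : ∀ (d : ℕ) (F : MvPolynomial σ k), F ≠ 0 → F.IsHomogeneous d →
      {i : ℕ | eval (c i) F = 0}.Finite)
    {M : ℕ → Submodule k (MvPolynomial σ k)} (hM : ∀ m, lin c o m * M m ≤ M (m + 1))
    (hMv : ∀ m, M m ≤ vanishing c (Finset.range m) m) :
    ∃ N, ∀ m ≥ N, M (m + 1) ≤ lin c o m * M m := by
  classical
  by_cases hbot : ∀ m, M m = ⊥
  · exact ⟨0, fun m _ => by rw [hbot (m + 1)]; exact bot_le⟩
  push Not at hbot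
  obtain ⟨d, hd⟩ := hbot
  obtain ⟨F, hF, hF0⟩ := (Submodule.ne_bot_iff _).1 hd
  obtain ⟨s, hsM, hs⟩ := (Submodule.fg_span_iff_fg_span_finset_subset
    (R := MvPolynomial σ k) (⋃ m, (M m : Set (MvPolynomial σ k)))).1
    (IsNoetherian.noetherian _)
  have hsM' : ∀ x : s, ∃ m, (x : MvPolynomial σ k) ∈ M m := fun x => by
    simpa using hsM x.2
  choose n hn using hsM'
  let f : Option s → MvPolynomial σ k := fun x => x.elim F (fun x => (x : MvPolynomial σ k))
  let ν : Option s → ℕ := fun x => x.elim d n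
  have hfM : ∀ i, f i ∈ M (ν i) := by rintro (_ | x); exacts [hF, hn x]
  have hf : ∀ i, (f i).IsHomogeneous (ν i) := fun i => (hMv _ (hfM i)).1
  have hspan : ∀ m, ∀ φ ∈ M m, φ ∈ Ideal.span (Set.range f) := by
    intro m φ hφ
    have h1 : φ ∈ Submodule.span (MvPolynomial σ k) (⋃ m, (M m : Set (MvPolynomial σ k))) :=
      Submodule.subset_span (Set.mem_iUnion.2 ⟨m, hφ⟩)
    rw [hs] at h1
    have h2 : (s : Set (MvPolynomial σ k)) ⊆ Set.range f := fun x hx => ⟨some ⟨x, hx⟩, rfl⟩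
    exact Submodule.span_mono h2 h1
  obtain ⟨N₁, hN₁⟩ : ∃ N₁, ∀ i ≥ N₁, eval (c i) F ≠ 0 := by
    obtain ⟨B, hB⟩ := (hdense d F hF0 (hf none)).bddAbove
    exact ⟨B + 1, fun i hi h => by
      have := hB (show i ∈ {i : ℕ | eval (c i) F = 0} from h)
      omega⟩
  obtain ⟨N₂, hN₂⟩ : ∃ N₂, ∀ i, ν i ≤ N₂ :=
    ⟨Finset.univ.sup ν, fun i => Finset.le_sup (Finset.mem_univ i)⟩
  obtain ⟨N₀, hN₀⟩ : ∃ N₀, N₀ = N₁ + N₂ + d := ⟨_, rfl⟩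
  have hrep : ∀ m ≥ N₀, ∀ φ ∈ M m, ∃ g : Option s → MvPolynomial σ k,
      (∀ i, g i ∈ vanishing c (Finset.Ico N₀ m) (m - ν i)) ∧ ∑ i, g i * f i = φ := by
    intro m hm φ hφ
    obtain ⟨g, hg, hgφ⟩ := exists_isHomogeneous_of_mem_span hf (m := m)
      (fun i => by have := hN₂ i; omega) (hMv m hφ).1 (hspan m φ hφ)
    obtain ⟨g', hg', hgg⟩ := exists_vanishing_coeffs hc he hf none (Z := Finset.Ico N₀ m)
      (fun z hz => hN₁ z (by have := (Finset.mem_Ico.1 hz).1; omega)) (m := m)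
      (fun i => by
        have := hN₂ i
        have : ν none = d := rfl
        simp only [Nat.card_Ico]; omega) hg
      (fun z hz => by
        rw [hgφ]; exact (hMv m hφ).2 z (Finset.mem_range.2 (Finset.mem_Ico.1 hz).2))
    exact ⟨g', hg', hgg.trans hgφ⟩
  let G : ℕ → Submodule k (Option s → MvPolynomial σ k) := fun m =>
    { carrier := {g | (∀ i, g i ∈ vanishing c (Finset.Ico N₀ m) (m - ν i)) ∧
        ∑ i, g i * f i ∈ M m}
      add_mem' := fun {a b} ha hb => ⟨fun i => add_mem (ha.1 i) (hb.1 i), by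
        simpa only [Pi.add_apply, add_mul, Finset.sum_add_distrib] using add_mem ha.2 hb.2⟩
      zero_mem' := ⟨fun i => zero_mem _, by simp⟩
      smul_mem' := fun r a ha => ⟨fun i => Submodule.smul_mem _ r (ha.1 i), by
        simpa only [Pi.smul_apply, smul_mul_assoc, ← Finset.smul_sum]
          using Submodule.smul_mem _ r ha.2⟩ }
  let ev : (Option s → MvPolynomial σ k) →ₗ[k] (Option s → Fin N₀ → k) :=
    LinearMap.pi fun i => LinearMap.pi fun j =>
      (aeval (c j)).toLinearMap.comp (LinearMap.proj i)
  have hev : ∀ g i j, ev g i j = eval (c j) (g i) := by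
    intro g i j
    simp [ev, aeval_eq_eval]
  have hℓ : ∀ m, linForm (c m) o e ∈ lin c o m := fun m => Submodule.subset_span ⟨e, rfl⟩
  have hGℓ : ∀ m ≥ N₀, ∀ g ∈ G m, (fun i => linForm (c m) o e * g i) ∈ G (m + 1) := by
    rintro m hm g ⟨hg, hgM⟩
    refine ⟨fun i => ⟨?_, fun z hz => ?_⟩, ?_⟩
    · have := (linForm_isHomogeneous (c m) o e).mul (hg i).1
      rwa [show 1 + (m - ν i) = m + 1 - ν i by have := hN₂ i; omega] at this
    · rw [map_mul]
      rcases eq_or_ne z m with rfl | hzm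
      · simp [hc]
      · rw [(hg i).2 z (by simp only [Finset.mem_Ico] at hz ⊢; omega), mul_zero]
    · simp only [mul_assoc, ← Finset.mul_sum]
      exact hM m (Submodule.mul_mem_mul (hℓ m) hgM)
  let u : ℕ → (Option s → Fin N₀ → k) →ₗ[k] (Option s → Fin N₀ → k) := fun m =>
    LinearMap.pi fun i => LinearMap.pi fun j =>
      (c j e - c m e) • (LinearMap.proj (R := k) (φ := fun _ : Fin N₀ => k) j).comp
        (LinearMap.proj (φ := fun _ : Option s => Fin N₀ → k) i)
  have hu : ∀ m v i j, u m v i j = (c j e - c m e) * v i j := fun m v i j => rfl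
  have huinj : ∀ m ≥ N₀, Function.Injective (u m) := by
    intro m hm v w hvw
    funext i j
    have h1 := congrFun (congrFun hvw i) j
    rw [hu, hu] at h1
    refine mul_left_cancel₀ (sub_ne_zero.2 fun h => ?_) h1
    have := he h
    have := j.2
    omega
  have huev : ∀ m g, ev (fun i => linForm (c m) o e * g i) = u m (ev g) := by
    intro m g
    funext i j
    rw [hev, hu, hev, map_mul, eval_linForm, hc, mul_one]
  have hle : ∀ m ≥ N₀, ((G m).map ev).map (u m) ≤ (G (m + 1)).map ev := by
    rintro m hm _ ⟨_, ⟨g, hg, rfl⟩, rfl⟩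
    exact ⟨_, hGℓ m hm g hg, huev m g⟩
  have hrank : ∀ m ≥ N₀, Module.finrank k (((G m).map ev).map (u m))
      = Module.finrank k ((G m).map ev) := fun m hm =>
    ((Submodule.equivMapOfInjective _ (huinj m hm) _).finrank_eq).symm
  obtain ⟨N, hN, hNeq⟩ := exists_forall_ge_eq_of_monotone_of_le
    (u := fun m => Module.finrank k ((G m).map ev)) (N := N₀)
    (B := Module.finrank k (Option s → Fin N₀ → k))
    (fun m hm => by
      rw [← hrank m hm]
      exact Submodule.finrank_mono (hle m hm))
    (fun m => Submodule.finrank_le _)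
  refine ⟨N, fun m hm φ hφ => ?_⟩
  obtain ⟨g, hg, rfl⟩ := hrep (m + 1) (by omega) φ hφ
  have heq : ((G m).map ev).map (u m) = (G (m + 1)).map ev :=
    Submodule.eq_of_le_of_finrank_eq (hle m (by omega))
      ((hrank m (by omega)).trans (hNeq m hm))
  obtain ⟨_, ⟨g', hg', rfl⟩, hgg⟩ : ev g ∈ ((G m).map ev).map (u m) :=
    heq ▸ ⟨g, ⟨hg, hφ⟩, rfl⟩
  have hG' := hGℓ m (by omega) g' hg'
  have hdiff : ∀ i, (g i - linForm (c m) o e * g' i) * f i ∈ lin c o m * M m := by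
    intro i
    have hνi := hN₂ i
    have h1 : g i - linForm (c m) o e * g' i
        ∈ vanishing c (insert m (Finset.Ico (ν i) m)) (m - ν i + 1) := by
      have h2 := sub_mem (hg i) (hG'.1 i)
      refine ⟨?_, fun z hz => ?_⟩
      · rw [show m - ν i + 1 = m + 1 - ν i by omega]
        exact h2.1
      · have hzm : z ≤ m := by
          rcases Finset.mem_insert.1 hz with rfl | hz
          · exact le_rfl
          · exact (Finset.mem_Ico.1 hz).2.le
        rcases le_or_gt N₀ z with hz0 | hz0
        · exact h2.2 z (Finset.mem_Ico.2 ⟨hz0, by omega⟩)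
        · have h3 := congrFun (congrFun hgg i) ⟨z, hz0⟩
          rw [← huev, hev, hev] at h3
          rw [map_sub, ← h3, sub_self]
    have h2 := vanishing_insert_le hc he (by simp) (by simp) h1
    have h3 := Submodule.mul_mem_mul h2 (hfM i)
    rw [mul_assoc] at h3
    have h4 := vanishing_mul_le hc he hM (ν i) (m - ν i)
    rw [show ν i + (m - ν i) = m by omega] at h4
    exact mul_le_mul_right h4 _ h3
  have : ∑ i, g i * f i = ∑ i, (g i - linForm (c m) o e * g' i) * f i
      + linForm (c m) o e * ∑ i, g' i * f i := by
    rw [Finset.mul_sum, ← Finset.sum_add_distrib]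
    exact Finset.sum_congr rfl fun i _ => by ring
  rw [this]
  exact add_mem (Submodule.sum_mem _ fun i _ => hdiff i) (Submodule.mul_mem_mul (hℓ m) hg'.2)

end Graded

section Operators

open LaurentPolynomial (T)

variable {k : Type*} [Field k] {t : ℕ}

theorem end_ext_T {V : Type*} [AddCommMonoid V] [Module k V] {a b : LaurentPolynomial k →ₗ[k] V}
    (h : ∀ m : ℤ, a (T m) = b (T m)) : a = b :=
  (AddMonoidAlgebra.basis ℤ k).ext fun m => by
    simpa [AddMonoidAlgebra.basis] using h m

/-- The point `(1 : p₁ᵐ : ⋯ : p_tᵐ)`. -/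
def pt (p : Fin t → k) (m : ℤ) : Fin (t + 1) → k := Fin.cons 1 fun j => p j ^ m

@[simp]
theorem pt_zero (p : Fin t → k) (m : ℤ) : pt p m 0 = 1 := rfl

@[simp]
theorem pt_succ (p : Fin t → k) (m : ℤ) (j : Fin t) : pt p m j.succ = p j ^ m := rfl

/-- The operator `Yᵐ ↦ f(1, p₁ᵐ, …, p_tᵐ) Y^{m-n}`. -/
def symbolOp (p : Fin t → k) (n : ℕ) :
    MvPolynomial (Fin (t + 1)) k →ₗ[k] Module.End k (LaurentPolynomial k) where
  toFun f := (AddMonoidAlgebra.basis ℤ k).constr k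
    fun m => eval (pt p m) f • (T (m - n) : LaurentPolynomial k)
  map_add' f g := (AddMonoidAlgebra.basis ℤ k).ext fun m => by
    simp only [LinearMap.add_apply, Module.Basis.constr_basis, map_add, add_smul]
  map_smul' r f := (AddMonoidAlgebra.basis ℤ k).ext fun m => by
    simp only [LinearMap.smul_apply, Module.Basis.constr_basis, smul_eval, mul_smul,
      RingHom.id_apply]

theorem symbolOp_T (p : Fin t → k) (n : ℕ) (f : MvPolynomial (Fin (t + 1)) k) (m : ℤ) :
    symbolOp p n f (T m) = eval (pt p m) f • (T (m - n) : LaurentPolynomial k) :=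
  (AddMonoidAlgebra.basis ℤ k).constr_basis k _ m

/-- The degree `n` coefficients of an operator. -/
def coeffFun (n : ℕ) : Module.End k (LaurentPolynomial k) →ₗ[k] (ℤ → k) where
  toFun a m := (a (T m)).coeff (m - n)
  map_add' a b := by ext m; simp
  map_smul' r a := by ext m; simp

theorem coeffFun_symbolOp (p : Fin t → k) (n j : ℕ) (f : MvPolynomial (Fin (t + 1)) k) :
    coeffFun n (symbolOp p j f) = if j = n then fun m => eval (pt p m) f else 0 := by
  funext m
  change (symbolOp p j f (T m)).coeff (m - n) = _
  rw [symbolOp_T]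
  split_ifs with h
  · subst h; simp
  · simp [h]

variable {p : Fin t → k} {D : Fin t → Module.End k (LaurentPolynomial k)}

theorem derivative_mul_symbolOp (hp0 : ∀ i, p i ≠ 0)
    (hD : ∀ i, ∀ n : ℤ, D i (T n) = ((p i ^ n - 1) / (p i - 1)) • (T (n - 1) : LaurentPolynomial k))
    (i : Fin t) (n : ℕ) (f : MvPolynomial (Fin (t + 1)) k) :
    D i * symbolOp p n f
      = symbolOp p (n + 1) (((p i - 1)⁻¹ * (p i ^ n)⁻¹) • (linForm (pt p n) 0 i.succ * f)) := by
  refine end_ext_T fun m => ?_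
  rw [Module.End.mul_apply, symbolOp_T, map_smul, hD, symbolOp_T, smul_smul, smul_eval, map_mul,
    eval_linForm]
  have h1 : m - (n : ℤ) - 1 = m - ((n + 1 : ℕ) : ℤ) := by push_cast; ring
  have h2 : p i ^ (m - n) = p i ^ m * (p i ^ n)⁻¹ := by
    rw [zpow_sub₀ (hp0 i), zpow_natCast, div_eq_mul_inv]
  have h3 : (p i ^ n)⁻¹ * p i ^ n = 1 := inv_mul_cancel₀ (pow_ne_zero _ (hp0 i))
  rw [h1, h2]
  congr 1
  simp only [pt_zero, pt_succ, zpow_natCast, mul_one, div_eq_mul_inv]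
  linear_combination ((eval (pt p m) f) * (p i - 1)⁻¹) * h3

theorem linForm_mul_symbolOp (hp0 : ∀ i, p i ≠ 0) (hp1 : ∀ i, p i ≠ 1)
    (hD : ∀ i, ∀ n : ℤ, D i (T n) = ((p i ^ n - 1) / (p i - 1)) • (T (n - 1) : LaurentPolynomial k))
    (n : ℕ) {ℓ : MvPolynomial (Fin (t + 1)) k} (hℓ : ℓ ∈ lin (fun i : ℕ => pt p i) 0 n) :
    ∃ a ∈ Submodule.span k (Set.range D), ∀ f, symbolOp p (n + 1) (ℓ * f) = a * symbolOp p n f := by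
  induction hℓ using Submodule.span_induction with
  | mem ℓ h =>
    obtain ⟨j, rfl⟩ := h
    refine Fin.cases ⟨0, zero_mem _, fun f => ?_⟩ (fun i => ?_) j
    · simp [linForm]
    · refine ⟨((p i - 1) * p i ^ n) • D i,
        Submodule.smul_mem _ _ (Submodule.subset_span ⟨i, rfl⟩), fun f => ?_⟩
      rw [smul_mul_assoc, derivative_mul_symbolOp hp0 hD, map_smul, smul_smul]
      have h1 := sub_ne_zero.2 (hp1 i)
      have h2 := pow_ne_zero n (hp0 i)
      rw [show (p i - 1) * p i ^ n * ((p i - 1)⁻¹ * (p i ^ n)⁻¹) = 1 by field_simp, one_smul]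
  | zero => exact ⟨0, zero_mem _, fun f => by simp⟩
  | add x y _ _ hx hy =>
    obtain ⟨a, ha, hx⟩ := hx
    obtain ⟨b, hb, hy⟩ := hy
    exact ⟨a + b, add_mem ha hb, fun f => by rw [add_mul, map_add, hx, hy, add_mul]⟩
  | smul r x _ hx =>
    obtain ⟨a, ha, hx⟩ := hx
    exact ⟨r • a, Submodule.smul_mem _ r ha, fun f => by
      rw [smul_mul_assoc, map_smul, hx, smul_mul_assoc]⟩

/-- The space of operators whose symbols lie in a graded family of polynomials. -/
def symbolSpan (p : Fin t → k) (Y : ℕ → Submodule k (MvPolynomial (Fin (t + 1)) k)) :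
    Submodule k (Module.End k (LaurentPolynomial k)) :=
  ⨆ n, (Y n).map (symbolOp p n)

theorem mul_mem_of_mem_adjoin {R E : Type*} [CommSemiring R] [Semiring E] [Algebra R E] {s : Set E}
    {W : Submodule R E} (hW : ∀ x ∈ s, ∀ w ∈ W, x * w ∈ W) {a w : E}
    (ha : a ∈ Algebra.adjoin R s) (hw : w ∈ W) : a * w ∈ W := by
  induction ha using Algebra.adjoin_induction generalizing w with
  | mem x hx => exact hW x hx w hw
  | algebraMap r => rw [← Algebra.smul_def]; exact W.smul_mem r hw
  | add x y _ _ hx hy => rw [add_mul]; exact add_mem (hx hw) (hy hw)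
  | mul x y _ _ hx hy => rw [mul_assoc]; exact hx (hy hw)

theorem derivative_mul_mem_map (hp0 : ∀ i, p i ≠ 0)
    (hD : ∀ i, ∀ n : ℤ, D i (T n) = ((p i ^ n - 1) / (p i - 1)) • (T (n - 1) : LaurentPolynomial k))
    {n : ℕ} {Y Y' : Submodule k (MvPolynomial (Fin (t + 1)) k)}
    (hY : lin (fun i : ℕ => pt p i) 0 n * Y ≤ Y') (i : Fin t)
    {w : Module.End k (LaurentPolynomial k)} (hw : w ∈ Y.map (symbolOp p n)) :
    D i * w ∈ Y'.map (symbolOp p (n + 1)) := by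
  obtain ⟨f, hf, rfl⟩ := hw
  rw [derivative_mul_symbolOp hp0 hD]
  exact ⟨_, Submodule.smul_mem _ _
    (hY (Submodule.mul_mem_mul (Submodule.subset_span ⟨_, rfl⟩) hf)), rfl⟩

theorem adjoin_mul_mem_symbolSpan (hp0 : ∀ i, p i ≠ 0)
    (hD : ∀ i, ∀ n : ℤ, D i (T n) = ((p i ^ n - 1) / (p i - 1)) • (T (n - 1) : LaurentPolynomial k))
    {Y : ℕ → Submodule k (MvPolynomial (Fin (t + 1)) k)}
    (hY : ∀ n, lin (fun i : ℕ => pt p i) 0 n * Y n ≤ Y (n + 1))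
    {a w : Module.End k (LaurentPolynomial k)} (ha : a ∈ Algebra.adjoin k (Set.range D))
    (hw : w ∈ symbolSpan p Y) : a * w ∈ symbolSpan p Y := by
  refine mul_mem_of_mem_adjoin ?_ ha hw
  rintro _ ⟨i, rfl⟩ w hw
  have h1 : symbolSpan p Y ≤ (symbolSpan p Y).comap (LinearMap.mulLeft k (D i)) :=
    iSup_le fun n w hw => (le_iSup (fun n => (Y n).map (symbolOp p n)) (n + 1))
      (derivative_mul_mem_map hp0 hD (hY n) i hw)
  exact h1 hw

theorem lin_mul_vanishing_le {c : ℕ → Fin (t + 1) → k} (hc : ∀ i, c i 0 = 1) (n : ℕ) :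
    lin c 0 n * vanishing c (Finset.range n) n ≤ vanishing c (Finset.range (n + 1)) (n + 1) := by
  have h1 : lin c 0 n ≤ vanishing c {n} 1 := Submodule.span_le.2 <| by
    rintro _ ⟨j, rfl⟩
    exact ⟨linForm_isHomogeneous _ _ _, by simp [hc]⟩
  refine Submodule.mul_le.2 fun ℓ hℓ f hf => ⟨?_, fun i hi => ?_⟩
  · exact add_comm 1 n ▸ (h1 hℓ).1.mul hf.1
  · rw [map_mul]
    rcases (Nat.lt_succ_iff_lt_or_eq.1 (Finset.mem_range.1 hi)) with h | rfl
    · rw [hf.2 i (Finset.mem_range.2 h), mul_zero]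
    · rw [(h1 hℓ).2 i (by simp), zero_mul]

theorem symbolOp_zero_one : symbolOp p 0 1 = 1 :=
  end_ext_T fun m => by simp [symbolOp_T]

theorem exists_injective_pt (ht : 2 ≤ t) (hp0 : ∀ i, p i ≠ 0)
    (hfree : ∀ m : Fin t → ℤ, (∏ i, p i ^ m i) = 1 → ∀ i, m i = 0) :
    ∃ e, Function.Injective fun i : ℕ => pt p i e := by
  let j : Fin t := ⟨0, by omega⟩
  refine ⟨j.succ, fun a b hab => ?_⟩
  have h1 : p j ^ (a : ℤ) = p j ^ (b : ℤ) := hab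
  have h2 := hfree (Pi.single j ((a : ℤ) - b)) (by
    rw [Finset.prod_eq_single j]
    · rw [Pi.single_eq_same, zpow_sub₀ (hp0 j), h1, div_self (zpow_ne_zero _ (hp0 j))]
    · intro i _ hi; rw [Pi.single_eq_of_ne hi, zpow_zero]
    · simp) j
  rw [Pi.single_eq_same] at h2
  omega

theorem symbolOp_mem_adjoin (hp0 : ∀ i, p i ≠ 0) (hp1 : ∀ i, p i ≠ 1)
    (hD : ∀ i, ∀ n : ℤ, D i (T n) = ((p i ^ n - 1) / (p i - 1)) • (T (n - 1) : LaurentPolynomial k))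
    {e : Fin (t + 1)} (he : Function.Injective fun i : ℕ => pt p i e) (n : ℕ) :
    vanishing (fun i : ℕ => pt p i) (Finset.range n) n
      ≤ (Subalgebra.toSubmodule (Algebra.adjoin k (Set.range D))).comap (symbolOp p n) := by
  induction n with
  | zero =>
    intro f hf
    have h0 := (totalDegree_zero_iff_isHomogeneous (Fin (t + 1))).2 hf.1
    rw [totalDegree_eq_zero_iff_eq_C] at h0
    rw [h0, ← mul_one (C _), ← smul_eq_C_mul]
    refine Submodule.smul_mem _ _ ?_
    rw [Submodule.mem_comap, symbolOp_zero_one]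
    exact one_mem (Algebra.adjoin k (Set.range D))
  | succ n ih =>
    rw [Finset.range_add_one]
    refine (vanishing_insert_le (o := 0) (fun _ => rfl) he (by simp) (by simp)).trans
      (Submodule.mul_le.2 fun ℓ hℓ f hf => ?_)
    obtain ⟨a, ha, h⟩ := linForm_mul_symbolOp hp0 hp1 hD n hℓ
    rw [Submodule.mem_comap, h]
    exact (Algebra.adjoin k (Set.range D)).mul_mem (Algebra.span_le_adjoin k _ ha) (ih hf)

/-- Forms separate: a form vanishing at all `(1 : p₁ᵐ : ⋯ : p_tᵐ)`, `m ∈ ℤ`, is zero. -/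
theorem eq_zero_of_forall_eval_pt (hp0 : ∀ i, p i ≠ 0)
    (hfree : ∀ m : Fin t → ℤ, (∏ i, p i ^ m i) = 1 → ∀ i, m i = 0)
    {φ : MvPolynomial (Fin (t + 1)) k} {n : ℕ} (hφ : φ.IsHomogeneous n)
    (h : ∀ m : ℤ, eval (pt p m) φ = 0) : φ = 0 := by
  classical
  let u : (Fin (t + 1) →₀ ℕ) → kˣ := fun d => ∏ j, Units.mk0 (p j) (hp0 j) ^ d (Fin.succ j)
  let χ : (Fin (t + 1) →₀ ℕ) → (Multiplicative ℤ →* k) := fun d =>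
    (Units.coeHom k).comp (zpowersHom kˣ (u d))
  have hχ : ∀ d (m : ℤ), χ d (Multiplicative.ofAdd m) = ∏ i, pt p m i ^ d i := by
    intro d m
    simp only [χ, u, Fin.prod_univ_succ, pt_zero, one_pow, one_mul, pt_succ, MonoidHom.comp_apply,
      zpowersHom_apply, toAdd_ofAdd, Units.coeHom_apply, Units.val_zpow_eq_zpow_val,
      Units.coe_prod, Units.val_pow_eq_pow_val, Units.val_mk0, ← Finset.prod_zpow]
    exact Finset.prod_congr rfl fun j _ => by rw [← zpow_natCast, ← zpow_natCast, zpow_comm]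
  have hdeg : ∀ d ∈ φ.support, d.degree = n := by
    intro d hd
    by_contra hne
    exact (mem_support_iff.1 hd) (hφ.coeff_eq_zero hne)
  have hinj : Function.Injective fun d : φ.support => χ d := by
    rintro ⟨d, hd⟩ ⟨d', hd'⟩ hdd
    have h1 := DFunLike.congr_fun hdd (Multiplicative.ofAdd 1)
    simp only [hχ, Fin.prod_univ_succ, pt_zero, one_pow, one_mul, pt_succ, zpow_one] at h1
    have h2 := hfree (fun j => (d j.succ : ℤ) - d' j.succ) (by
      simp only [zpow_sub₀ (hp0 _), zpow_natCast, Finset.prod_div_distrib]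
      rw [h1]
      exact div_self (Finset.prod_ne_zero_iff.2 fun j _ => pow_ne_zero _ (hp0 j)))
    have h3 : ∀ j : Fin t, d j.succ = d' j.succ := fun j => by have := h2 j; omega
    have h4 := (hdeg d hd).trans (hdeg d' hd').symm
    rw [Finsupp.degree_eq_sum, Finsupp.degree_eq_sum, Fin.sum_univ_succ, Fin.sum_univ_succ,
      Finset.sum_congr rfl fun j _ => h3 j] at h4
    refine Subtype.ext (Finsupp.ext fun i => Fin.cases ?_ h3 i)
    simpa using h4
  have hli := (linearIndependent_monoidHom (Multiplicative ℤ) k).comp _ hinj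
  rw [Fintype.linearIndependent_iff] at hli
  have h5 := hli (fun d => coeff d φ) (by
    funext m
    have h6 := h m.toAdd
    rw [eval_eq', ← Finset.sum_coe_sort] at h6
    simp only [Finset.sum_apply, Pi.smul_apply, Function.comp_apply, smul_eq_mul, Pi.zero_apply]
    rw [← h6]
    exact Finset.sum_congr rfl fun d _ => by rw [← hχ]; rfl)
  ext d
  by_cases hd : d ∈ φ.support
  · simpa using h5 ⟨d, hd⟩
  · simpa using notMem_support_iff.1 hd

theorem mem_of_symbolOp_mem_symbolSpan (hp0 : ∀ i, p i ≠ 0)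
    (hfree : ∀ m : Fin t → ℤ, (∏ i, p i ^ m i) = 1 → ∀ i, m i = 0)
    {Y : ℕ → Submodule k (MvPolynomial (Fin (t + 1)) k)}
    (hY : ∀ n, Y n ≤ homogeneousSubmodule _ k n) {n : ℕ} {φ : MvPolynomial (Fin (t + 1)) k}
    (hφ : φ.IsHomogeneous n) (h : symbolOp p n φ ∈ symbolSpan p Y) : φ ∈ Y n := by
  have h1 : symbolSpan p Y
      ≤ ((Y n).map (LinearMap.pi fun m : ℤ => (aeval (pt p m)).toLinearMap)).comap (coeffFun n) := by
    refine iSup_le fun j => Submodule.map_le_iff_le_comap.2 fun f hf => ?_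
    rw [Submodule.mem_comap, Submodule.mem_comap, coeffFun_symbolOp]
    split_ifs with hj
    · subst hj
      exact ⟨f, hf, by funext m; simp [aeval_eq_eval]⟩
    · exact zero_mem _
  obtain ⟨ψ, hψ, hψφ⟩ := h1 h
  rw [coeffFun_symbolOp, if_pos rfl] at hψφ
  have h2 : φ - ψ = 0 := eq_zero_of_forall_eval_pt hp0 hfree (hφ.sub (hY n hψ)) fun m => by
    have := congrFun hψφ m
    simp only [LinearMap.pi_apply, AlgHom.toLinearMap_apply, aeval_eq_eval] at this
    rw [map_sub, ← this]
    simp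
  rwa [sub_eq_zero.1 h2]

/-- The operators with symbols of degree less than `n`. -/
def filtration (p : Fin t → k) (n : ℕ) : Submodule k (Module.End k (LaurentPolynomial k)) :=
  (Finset.range n).sup fun j =>
    (vanishing (fun i : ℕ => pt p i) (Finset.range j) j).map (symbolOp p j)

theorem filtration_succ (p : Fin t → k) (n : ℕ) : filtration p (n + 1)
    = (vanishing (fun i : ℕ => pt p i) (Finset.range n) n).map (symbolOp p n) ⊔ filtration p n := by
  rw [filtration, Finset.range_add_one, Finset.sup_insert]; rfl

theorem filtration_mono (p : Fin t → k) : Monotone (filtration p) := fun _ _ h =>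
  Finset.sup_mono (Finset.range_mono h)

instance (p : Fin t → k) (n : ℕ) : FiniteDimensional k (filtration p n) := by
  have h1 : ∀ j, FiniteDimensional k
      (vanishing (fun i : ℕ => pt p i) (Finset.range j) j) := fun j => by
    have : FiniteDimensional k (homogeneousSubmodule (Fin (t + 1)) k j) :=
      Module.Finite.iff_fg.2 (homogeneousSubmodule_fg _ _ j)
    exact Submodule.finiteDimensional_of_le (S₂ := homogeneousSubmodule (Fin (t + 1)) k j)
      fun f hf => hf.1
  exact Submodule.finiteDimensional_finset_sup _ _

theorem mul_mem_filtration_succ (hp0 : ∀ i, p i ≠ 0)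
    (hD : ∀ i, ∀ n : ℤ, D i (T n) = ((p i ^ n - 1) / (p i - 1)) • (T (n - 1) : LaurentPolynomial k))
    {n : ℕ} {a w : Module.End k (LaurentPolynomial k)} (ha : a ∈ Submodule.span k (Set.range D))
    (hw : w ∈ filtration p n) : a * w ∈ filtration p (n + 1) := by
  have h1 : Submodule.span k (Set.range D)
      ≤ (filtration p (n + 1)).comap (LinearMap.mulRight k w) := by
    rw [Submodule.span_le]
    rintro _ ⟨i, rfl⟩
    have h2 : filtration p n ≤ (filtration p (n + 1)).comap (LinearMap.mulLeft k (D i)) := by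
      refine Finset.sup_le fun j hj v hv => ?_
      have h3 := derivative_mul_mem_map hp0 hD
        (lin_mul_vanishing_le (c := fun i : ℕ => pt p i) (fun _ => rfl) j) i hv
      exact Finset.le_sup (f := fun j =>
        (vanishing (fun i : ℕ => pt p i) (Finset.range j) j).map (symbolOp p j))
        (Finset.mem_range.2 (Nat.succ_lt_succ (Finset.mem_range.1 hj))) h3
    exact h2 hw
  exact h1 ha

theorem exists_mem_filtration (hp0 : ∀ i, p i ≠ 0)
    (hD : ∀ i, ∀ n : ℤ, D i (T n) = ((p i ^ n - 1) / (p i - 1)) • (T (n - 1) : LaurentPolynomial k))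
    {a : Module.End k (LaurentPolynomial k)} (ha : a ∈ Algebra.adjoin k (Set.range D)) :
    ∃ n, a ∈ filtration p n := by
  rw [← Submodule.mem_iSup_of_directed _ (filtration_mono p).directed_le, ← mul_one a]
  refine mul_mem_of_mem_adjoin ?_ ha ?_
  · rintro _ ⟨i, rfl⟩ w hw
    rw [Submodule.mem_iSup_of_directed _ (filtration_mono p).directed_le] at hw ⊢
    obtain ⟨n, hn⟩ := hw
    exact ⟨n + 1, mul_mem_filtration_succ hp0 hD (Submodule.subset_span ⟨i, rfl⟩) hn⟩
  · refine Submodule.mem_iSup_of_mem 1 ?_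
    rw [filtration_succ]
    refine Submodule.mem_sup_left ⟨1, ⟨isHomogeneous_one _ _, by simp⟩, symbolOp_zero_one⟩

theorem isNoetherianRing_of_dense (hp0 : ∀ i, p i ≠ 0) (hp1 : ∀ i, p i ≠ 1)
    (hD : ∀ i, ∀ n : ℤ, D i (T n) = ((p i ^ n - 1) / (p i - 1)) • (T (n - 1) : LaurentPolynomial k))
    {e : Fin (t + 1)} (he : Function.Injective fun i : ℕ => pt p i e)
    (hdense : ∀ (d : ℕ) (F : MvPolynomial (Fin (t + 1)) k), F ≠ 0 → F.IsHomogeneous d →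
      {i : ℕ | eval (pt p i) F = 0}.Finite) :
    IsNoetherianRing (Algebra.adjoin k (Set.range D)) := by
  set A := Algebra.adjoin k (Set.range D)
  refine isNoetherianRing_iff_ideal_fg _ |>.2 fun I => ?_
  have hgen : Submodule.span k (Set.range D) ≤ Subalgebra.toSubmodule A := Algebra.span_le_adjoin k _
  let push : Ideal A → Submodule k (Module.End k (LaurentPolynomial k)) := fun J =>
    (J.restrictScalars k).map A.val.toLinearMap
  have hpush : ∀ J : Ideal A, ∀ a ∈ Submodule.span k (Set.range D), ∀ x ∈ push J,
      a * x ∈ push J := by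
    rintro J a ha _ ⟨x, hx, rfl⟩
    exact ⟨⟨a, hgen ha⟩ * x, J.mul_mem_left _ hx, rfl⟩
  let M : ℕ → Submodule k (MvPolynomial (Fin (t + 1)) k) := fun n =>
    vanishing (fun i : ℕ => pt p i) (Finset.range n) n
      ⊓ (push I ⊔ filtration p n).comap (symbolOp p n)
  have hM : ∀ n, lin (fun i : ℕ => pt p i) 0 n * M n ≤ M (n + 1) := by
    intro n
    refine Submodule.mul_le.2 fun ℓ hℓ f hf =>
      ⟨lin_mul_vanishing_le (fun _ => rfl) n (Submodule.mul_mem_mul hℓ hf.1), ?_⟩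
    obtain ⟨a, ha, h⟩ := linForm_mul_symbolOp hp0 hp1 hD n hℓ
    obtain ⟨x, hx, b, hb, hxb⟩ := Submodule.mem_sup.1 hf.2
    rw [SetLike.mem_coe, Submodule.mem_comap, h, ← hxb, mul_add]
    exact Submodule.add_mem_sup (hpush I a ha x hx) (mul_mem_filtration_succ hp0 hD ha hb)
  obtain ⟨N, hN⟩ := exists_forall_ge_le_lin_mul (c := fun i : ℕ => pt p i) (o := 0) (fun _ => rfl) he hdense hM
    fun n => inf_le_left
  let Q : Submodule k A :=
    I.restrictScalars k ⊓ (filtration p (N + 1)).comap A.val.toLinearMap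
  have hQ : Q.FG := by
    rw [← Module.Finite.iff_fg]
    let φ : Q →ₗ[k] filtration p (N + 1) :=
      (A.val.toLinearMap.comp Q.subtype).codRestrict _ fun x => x.2.2
    refine Module.Finite.of_injective φ fun x y hxy => Subtype.ext (Subtype.ext ?_)
    exact congrArg (fun z : filtration p (N + 1) => (z : Module.End k (LaurentPolynomial k))) hxy
  obtain ⟨s, hs⟩ := hQ
  have hQJ : (Q : Set A) ⊆ Ideal.span (s : Set A) := fun x hx => by
    rw [← hs] at hx
    exact Submodule.span_le_restrictScalars k A _ hx
  have hJI : Ideal.span (s : Set A) ≤ I := Ideal.span_le.2 fun x hx =>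
    (hs ▸ Submodule.subset_span hx : x ∈ Q).1
  have hpJI : push (Ideal.span (s : Set A)) ≤ push I := Submodule.map_mono hJI
  have hmain : ∀ n, push I ⊓ filtration p n ≤ push (Ideal.span (s : Set A)) := by
    intro n
    induction n using Nat.strong_induction_on with
    | _ n ih =>
      rintro _ ⟨⟨x, hxI, rfl⟩, hxn⟩
      rcases le_or_gt n (N + 1) with hn | hn
      · exact ⟨x, hQJ ⟨hxI, filtration_mono p hn hxn⟩, rfl⟩
      obtain ⟨m, rfl⟩ : ∃ m, n = m + 1 + 1 := ⟨n - 2, by omega⟩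
      rw [SetLike.mem_coe, filtration_succ] at hxn
      obtain ⟨_, ⟨f, hf, rfl⟩, b, hb, hfb⟩ := Submodule.mem_sup.1 hxn
      have hfM : f ∈ M (m + 1) := ⟨hf, by
        rw [SetLike.mem_coe, Submodule.mem_comap, eq_sub_of_add_eq hfb]
        exact sub_mem (Submodule.mem_sup_left ⟨x, hxI, rfl⟩) (Submodule.mem_sup_right hb)⟩
      have hstep : lin (fun i : ℕ => pt p i) 0 m * M m
          ≤ (push (Ideal.span (s : Set A)) ⊔ filtration p (m + 1)).comap (symbolOp p (m + 1)) := by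
        refine Submodule.mul_le.2 fun ℓ hℓ g hg => ?_
        obtain ⟨a, ha, h⟩ := linForm_mul_symbolOp hp0 hp1 hD m hℓ
        obtain ⟨y, hy, b, hb, hyb⟩ := Submodule.mem_sup.1 hg.2
        rw [Submodule.mem_comap, h, ← hyb, mul_add]
        refine Submodule.add_mem_sup (hpush _ a ha y (ih (m + 1) (by omega) ⟨hy, ?_⟩))
          (mul_mem_filtration_succ hp0 hD ha hb)
        rw [SetLike.mem_coe, eq_sub_of_add_eq hyb, filtration_succ]
        exact sub_mem (Submodule.mem_sup_left ⟨g, hg.1, rfl⟩) (Submodule.mem_sup_right hb)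
      obtain ⟨y, hy, b', hb', hyb⟩ := Submodule.mem_sup.1 (hstep (hN m (by omega) hfM))
      have hxy : A.val.toLinearMap x - y ∈ push (Ideal.span (s : Set A)) := by
        refine ih (m + 1) (by omega) ⟨sub_mem ⟨x, hxI, rfl⟩ (hpJI hy), ?_⟩
        have : A.val.toLinearMap x - y = b' + b := by
          rw [← hfb, ← hyb]; abel
        rw [SetLike.mem_coe, this]
        exact add_mem hb' hb
      simpa using add_mem hxy hy
  refine ⟨s, le_antisymm hJI fun x hx => ?_⟩
  obtain ⟨n, hn⟩ := exists_mem_filtration hp0 hD x.2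
  obtain ⟨y, hy, hyx⟩ := hmain n ⟨⟨x, hx, rfl⟩, hn⟩
  rwa [← Subtype.ext hyx]

/-- The multiples `F g` with `g` vanishing at the `i`-th points for `N ≤ i < n`. -/
def multiples (c : ℕ → Fin (t + 1) → k) (F : MvPolynomial (Fin (t + 1)) k) (N n : ℕ) :
    Submodule k (MvPolynomial (Fin (t + 1)) k) where
  carrier := {φ | φ.IsHomogeneous n ∧
    ∃ g, (∀ i ∈ Finset.Ico N n, eval (c i) g = 0) ∧ F * g = φ}
  add_mem' := by
    rintro _ _ ⟨ha, g, hg, rfl⟩ ⟨hb, g', hg', rfl⟩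
    exact ⟨ha.add hb, g + g', fun i hi => by rw [map_add, hg i hi, hg' i hi, add_zero],
      mul_add _ _ _⟩
  zero_mem' := ⟨isHomogeneous_zero _ _ _, 0, by simp, mul_zero _⟩
  smul_mem' := by
    rintro r _ ⟨ha, g, hg, rfl⟩
    exact ⟨(homogeneousSubmodule _ k n).smul_mem r ha, r • g,
      fun i hi => by rw [smul_eval, hg i hi, mul_zero], mul_smul_comm _ _ _⟩

theorem lin_mul_multiples_le {c : ℕ → Fin (t + 1) → k} (hc : ∀ i, c i 0 = 1)
    (F : MvPolynomial (Fin (t + 1)) k) (N n : ℕ) :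
    lin c 0 n * multiples c F N n ≤ multiples c F N (n + 1) := by
  have h1 : lin c 0 n ≤ vanishing c {n} 1 := Submodule.span_le.2 <| by
    rintro _ ⟨j, rfl⟩
    exact ⟨linForm_isHomogeneous _ _ _, by simp [hc]⟩
  refine Submodule.mul_le.2 ?_
  rintro ℓ hℓ _ ⟨hf, g, hg, rfl⟩
  refine ⟨add_comm 1 n ▸ (h1 hℓ).1.mul hf, ℓ * g, fun i hi => ?_, by ring⟩
  rw [map_mul]
  rcases eq_or_ne i n with rfl | hin
  · rw [(h1 hℓ).2 i (by simp), zero_mul]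
  · rw [hg i (by simp only [Finset.mem_Ico] at hi ⊢; omega), mul_zero]

theorem dense_of_isNoetherianRing (hp0 : ∀ i, p i ≠ 0) (hp1 : ∀ i, p i ≠ 1)
    (hfree : ∀ m : Fin t → ℤ, (∏ i, p i ^ m i) = 1 → ∀ i, m i = 0)
    (hD : ∀ i, ∀ n : ℤ, D i (T n) = ((p i ^ n - 1) / (p i - 1)) • (T (n - 1) : LaurentPolynomial k))
    {e : Fin (t + 1)} (he : Function.Injective fun i : ℕ => pt p i e)
    (hA : IsNoetherianRing (Algebra.adjoin k (Set.range D)))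
    {d : ℕ} {F : MvPolynomial (Fin (t + 1)) k} (hF0 : F ≠ 0) (hF : F.IsHomogeneous d) :
    {i : ℕ | eval (pt p i) F = 0}.Finite := by
  classical
  by_contra hinf
  set A := Algebra.adjoin k (Set.range D)
  let c : ℕ → Fin (t + 1) → k := fun i => pt p i
  let J : ℕ →o Ideal A :=
    { toFun := fun N =>
        { carrier := {x | (x : Module.End k (LaurentPolynomial k))
            ∈ symbolSpan p (multiples c F N)}
          add_mem' := fun ha hb => (symbolSpan p (multiples c F N)).add_mem ha hb
          zero_mem' := zero_mem (symbolSpan p (multiples c F N))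
          smul_mem' := fun a x hx => adjoin_mul_mem_symbolSpan hp0 hD
            (lin_mul_multiples_le (fun _ => rfl) F N) a.2 hx }
      monotone' := fun N N' h x hx => (iSup_mono fun n => Submodule.map_mono <| by
        rintro _ ⟨hf, g, hg, rfl⟩
        exact ⟨hf, g, fun i hi => hg i (Finset.Ico_subset_Ico_left h hi), rfl⟩ :
          symbolSpan p (multiples c F N) ≤ symbolSpan p (multiples c F N')) hx }
  obtain ⟨N, hN⟩ := monotone_stabilizes_iff_noetherian.2 hA J
  obtain ⟨i, hi, hiN⟩ := (show {i : ℕ | eval (pt p i) F = 0}.Infinite from hinf).exists_gt N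
  obtain ⟨U, hU, hUcard⟩ :=
    (show {i : ℕ | eval (pt p i) F = 0}.Infinite from hinf).exists_subset_card_eq d
  let n := max (U.sup id) i + 1
  have hin : i < n := Nat.lt_succ_of_le (le_max_right _ _)
  have hUn : U ⊆ Finset.range n := fun j hj => Finset.mem_range.2
    (Nat.lt_succ_of_le ((Finset.le_sup (f := id) hj).trans (le_max_left _ _)))
  have hdn : d ≤ n := by simpa [hUcard] using Finset.card_le_card hUn
  let Z := (Finset.range n).filter fun j => eval (c j) F ≠ 0
  have hZ : Z.card ≤ n - d := by
    have h1 : Z ⊆ Finset.range n \ U := fun j hj => by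
      obtain ⟨hj1, hj2⟩ := Finset.mem_filter.1 hj
      exact Finset.mem_sdiff.2 ⟨hj1, fun hjU => hj2 (hU hjU)⟩
    have h2 := Finset.card_le_card h1
    rwa [Finset.card_sdiff_of_subset hUn, Finset.card_range, hUcard] at h2
  obtain ⟨g, hg, hgv⟩ := exists_interpolation (c := c) (o := 0) (fun _ => rfl) he (insert i Z) (m := n - d)
    ((Finset.card_insert_le _ _).trans (by omega)) (fun j => if j = i then 1 else 0)
  have hFg : (F * g).IsHomogeneous n := by
    have := hF.mul hg
    rwa [show d + (n - d) = n by omega] at this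
  have hFgv : F * g ∈ vanishing c (Finset.range n) n := by
    refine ⟨hFg, fun j hj => ?_⟩
    rw [map_mul]
    by_cases hjF : eval (c j) F = 0
    · rw [hjF, zero_mul]
    · rw [hgv j (Finset.mem_insert_of_mem (Finset.mem_filter.2 ⟨hj, hjF⟩)),
        if_neg (by rintro rfl; exact hjF hi), mul_zero]
  have hmemA : symbolOp p n (F * g) ∈ A := symbolOp_mem_adjoin hp0 hp1 hD he n hFgv
  have hmemJ : (⟨_, hmemA⟩ : A) ∈ J n :=
    (le_iSup (fun m => (multiples c F n m).map (symbolOp p m)) n) ⟨F * g, ⟨hFg, g, by simp, rfl⟩, rfl⟩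
  rw [← hN n (by omega)] at hmemJ
  obtain ⟨-, g', hg', hgg⟩ := mem_of_symbolOp_mem_symbolSpan hp0 hfree
    (Y := multiples c F N) (fun m φ hφ => hφ.1) hFg hmemJ
  have h1 := hg' i (Finset.mem_Ico.2 ⟨hiN.le, hin⟩)
  rw [mul_left_cancel₀ hF0 hgg, hgv i (Finset.mem_insert_self _ _), if_pos rfl] at h1
  exact one_ne_zero h1

theorem ne_one_of_free (hfree : ∀ m : Fin t → ℤ, (∏ i, p i ^ m i) = 1 → ∀ i, m i = 0)
    (i : Fin t) : p i ≠ 1 := by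
  intro h
  have h1 := hfree (Pi.single i 1) (by
    rw [Finset.prod_eq_single i]
    · rw [h, one_zpow]
    · intro j _ hj; rw [Pi.single_eq_of_ne hj, zpow_zero]
    · simp) i
  simp at h1

theorem isNoetherianRing_iff_dense (ht : 2 ≤ t) (hp0 : ∀ i, p i ≠ 0)
    (hfree : ∀ m : Fin t → ℤ, (∏ i, p i ^ m i) = 1 → ∀ i, m i = 0)
    (hD : ∀ i, ∀ n : ℤ, D i (T n)
      = ((p i ^ n - 1) / (p i - 1)) • (T (n - 1) : LaurentPolynomial k)) :
    IsNoetherianRing (Algebra.adjoin k (Set.range D)) ↔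
      ∀ (d : ℕ) (F : MvPolynomial (Fin (t + 1)) k), F ≠ 0 → F.IsHomogeneous d →
        {i : ℕ | eval (pt p i) F = 0}.Finite := by
  obtain ⟨e, he⟩ := exists_injective_pt ht hp0 hfree
  have hp1 := ne_one_of_free hfree
  exact ⟨fun hA d F hF0 hF => dense_of_isNoetherianRing hp0 hp1 hfree hD he hA hF0 hF,
    isNoetherianRing_of_dense hp0 hp1 hD he⟩

/-- Adjoint families of operators generate mutually opposite algebras. -/
theorem nonempty_mop_adjoin_algEquiv {ι M : Type*} [AddCommGroup M] [Module k M]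
    {B : M →ₗ[k] M →ₗ[k] k} (hB : B.Nondegenerate) {a b : ι → Module.End k M}
    (hab : ∀ i, LinearMap.IsAdjointPair B B (a i) (b i)) :
    Nonempty ((Algebra.adjoin k (Set.range a))ᵐᵒᵖ ≃ₐ[k] Algebra.adjoin k (Set.range b)) := by
  let S : Set (Module.End k M × (Module.End k M)ᵐᵒᵖ) :=
    Set.range fun i => (a i, MulOpposite.op (b i))
  have hS : ∀ x ∈ Algebra.adjoin k S, ∀ v w, B (x.1 v) w = B v (x.2.unop w) := by
    intro x hx
    induction hx using Algebra.adjoin_induction with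
    | mem x hx =>
      obtain ⟨i, rfl⟩ := hx
      exact fun v w => hab i v w
    | algebraMap r => intro v w; simp [Algebra.algebraMap_eq_smul_one]
    | add x y _ _ hx hy => intro v w; simp [hx, hy]
    | mul x y _ _ hx hy => intro v w; simp [hx, hy]
  let f := (AlgHom.fst k (Module.End k M) (Module.End k M)ᵐᵒᵖ).comp (Algebra.adjoin k S).val
  let g := (AlgHom.snd k (Module.End k M) (Module.End k M)ᵐᵒᵖ).comp (Algebra.adjoin k S).val
  have hf : Function.Injective f := by
    refine (injective_iff_map_eq_zero f).2 ?_
    rintro ⟨x, hx⟩ (h : x.1 = 0)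
    refine Subtype.ext (Prod.ext h (MulOpposite.unop_injective (LinearMap.ext fun w => ?_)))
    refine hB.2 _ fun v => ?_
    rw [← hS x hx, h, LinearMap.zero_apply, map_zero, LinearMap.zero_apply]
  have hg : Function.Injective g := by
    refine (injective_iff_map_eq_zero g).2 ?_
    rintro ⟨x, hx⟩ (h : x.2 = 0)
    refine Subtype.ext (Prod.ext (LinearMap.ext fun v => ?_) h)
    refine hB.1 _ fun w => ?_
    rw [hS x hx, h, MulOpposite.unop_zero, LinearMap.zero_apply, map_zero]
  have hfr : f.range = Algebra.adjoin k (Set.range a) := by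
    rw [AlgHom.range_comp, Subalgebra.range_val, AlgHom.map_adjoin, ← Set.range_comp]; rfl
  have hgr : g.range = (Algebra.adjoin k (Set.range b)).op := by
    rw [AlgHom.range_comp, Subalgebra.range_val, AlgHom.map_adjoin, ← Set.range_comp,
      Subalgebra.op_adjoin]
    congr 1
    ext x
    exact ⟨fun ⟨i, hi⟩ => ⟨i, congrArg MulOpposite.unop hi⟩,
      fun ⟨i, hi⟩ => ⟨i, MulOpposite.unop_injective hi⟩⟩
  exact ⟨(AlgEquiv.op (((Subalgebra.equivOfEq _ _ hfr.symm).trans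
    (AlgEquiv.ofInjective f hf).symm).trans
    ((AlgEquiv.ofInjective g hg).trans (Subalgebra.equivOfEq _ _ hgr)))).trans
    (Algebra.adjoin k (Set.range b)).algEquivOpMop.symm⟩

/-- The residue pairing, `(f, g) ↦` the coefficient of `Y⁻¹` in `f g`. -/
def residuePairing : LaurentPolynomial k →ₗ[k] LaurentPolynomial k →ₗ[k] k :=
  (LinearMap.mul k (LaurentPolynomial k)).compr₂
    ((AddMonoidAlgebra.basis ℤ k).coord (-1))

theorem residuePairing_T (m n : ℤ) :
    residuePairing (T m : LaurentPolynomial k) (T n) = if m + n = -1 then 1 else 0 := by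
  change ((T m * T n : LaurentPolynomial k)).coeff (-1) = _
  rw [← LaurentPolynomial.T_add, LaurentPolynomial.T_apply]

theorem residuePairing_T_right (f : LaurentPolynomial k) (n : ℤ) :
    residuePairing f (T n) = f.coeff (-1 - n) := by
  have : residuePairing.flip (T n) = ((AddMonoidAlgebra.basis ℤ k).coord (-1 - n) :
      LaurentPolynomial k →ₗ[k] k) := by
    refine end_ext_T fun m => ?_
    rw [LinearMap.flip_apply, residuePairing_T]
    change _ = (LaurentPolynomial.T m : LaurentPolynomial k).coeff (-1 - n)
    rw [LaurentPolynomial.T_apply]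
    exact if_congr (by omega) rfl rfl
  exact LinearMap.congr_fun this f

theorem residuePairing_comm (f g : LaurentPolynomial k) :
    residuePairing f g = residuePairing g f := by
  simp [residuePairing, mul_comm]

theorem residuePairing_nondegenerate :
    (residuePairing : LaurentPolynomial k →ₗ[k] LaurentPolynomial k →ₗ[k] k).Nondegenerate := by
  have h : ∀ f : LaurentPolynomial k, (∀ g, residuePairing f g = 0) → f = 0 := by
    intro f hf
    ext m
    have := hf (T (-1 - m))
    rwa [residuePairing_T_right, sub_sub_cancel] at this
  exact ⟨h, fun g hg => h g fun f => by rw [residuePairing_comm, hg]⟩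

theorem inv_free (hfree : ∀ m : Fin t → ℤ, (∏ i, p i ^ m i) = 1 → ∀ i, m i = 0)
    (m : Fin t → ℤ) (hm : (∏ i, (p i)⁻¹ ^ m i) = 1) (i : Fin t) : m i = 0 := by
  have := hfree (fun i => -m i) (by simpa only [inv_zpow'] using hm) i
  simpa using this

theorem isNoetherianRing_mop_iff_dense (ht : 2 ≤ t) (hp0 : ∀ i, p i ≠ 0)
    (hfree : ∀ m : Fin t → ℤ, (∏ i, p i ^ m i) = 1 → ∀ i, m i = 0)
    (hD : ∀ i, ∀ n : ℤ, D i (T n)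
      = ((p i ^ n - 1) / (p i - 1)) • (T (n - 1) : LaurentPolynomial k)) :
    IsNoetherianRing (Algebra.adjoin k (Set.range D))ᵐᵒᵖ ↔
      ∀ (d : ℕ) (F : MvPolynomial (Fin (t + 1)) k), F ≠ 0 → F.IsHomogeneous d →
        {i : ℕ | eval (pt p (-i)) F = 0}.Finite := by
  have hp1 := ne_one_of_free hfree
  let D' : Fin t → Module.End k (LaurentPolynomial k) := fun i =>
    symbolOp (fun i => (p i)⁻¹) 1 (((p i)⁻¹ - 1)⁻¹ • (X i.succ - X 0))
  have hD' : ∀ i, ∀ n : ℤ, D' i (T n)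
      = (((p i)⁻¹ ^ n - 1) / ((p i)⁻¹ - 1)) • (T (n - 1) : LaurentPolynomial k) := by
    intro i n
    simp only [D', symbolOp_T, smul_eval, map_sub, eval_X, pt_succ, pt_zero, Nat.cast_one]
    rw [div_eq_inv_mul]
  have hadj : ∀ i, LinearMap.IsAdjointPair residuePairing residuePairing (D i)
      ((-(p i)⁻¹) • D' i : Module.End k (LaurentPolynomial k)) := by
    intro i
    rw [LinearMap.isAdjointPair_iff_comp_eq_compl₂]
    refine end_ext_T fun m => end_ext_T fun n => ?_
    have h1 : p i - 1 ≠ 0 := sub_ne_zero.2 (hp1 i)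
    have h2 : (p i)⁻¹ - 1 ≠ 0 := sub_ne_zero.2 fun h => hp1 i (inv_eq_one.1 h)
    have h3 : (p i)⁻¹ * ((p i)⁻¹ - 1)⁻¹ = -(p i - 1)⁻¹ := by
      have h0 := hp0 i
      have h2' : 1 - p i ≠ 0 := sub_ne_zero.2 (hp1 i).symm
      field_simp
      ring
    simp only [LinearMap.comp_apply, LinearMap.compl₂_apply, LinearMap.smul_apply, hD, hD',
      map_smul, residuePairing_T, smul_eq_mul]
    rcases eq_or_ne n (-m) with rfl | hnm
    · rw [if_pos (by ring), if_pos (by ring), inv_zpow', neg_neg]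
      linear_combination (p i ^ m - 1) * h3
    · rw [if_neg (by omega), if_neg (by omega)]
      simp
  obtain ⟨e⟩ := nonempty_mop_adjoin_algEquiv residuePairing_nondegenerate hadj
  have hspan : Algebra.adjoin k (Set.range fun i => (-(p i)⁻¹) • D' i)
      = Algebra.adjoin k (Set.range D') := by
    refine le_antisymm (Algebra.adjoin_le ?_) (Algebra.adjoin_le ?_)
    · rintro _ ⟨i, rfl⟩
      exact Subalgebra.smul_mem _ (Algebra.subset_adjoin (Set.mem_range_self i)) _
    · rintro _ ⟨i, rfl⟩
      have h := Subalgebra.smul_mem (Algebra.adjoin k (Set.range fun i => (-(p i)⁻¹) • D' i))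
        (Algebra.subset_adjoin (Set.mem_range_self i)) (-p i)
      simpa [smul_smul, hp0 i] using h
  rw [hspan] at e
  have key := isNoetherianRing_iff_dense (p := fun i => (p i)⁻¹) (D := D') ht
    (fun i => inv_ne_zero (hp0 i)) (inv_free hfree) hD'
  have hpt : ∀ i : ℕ, pt (fun i => (p i)⁻¹) i = pt p (-i) := fun i => by
    ext j
    refine Fin.cases rfl (fun j => ?_) j
    rw [pt_succ, pt_succ, inv_zpow']
  simp only [hpt] at key
  rw [← key]
  exact ⟨fun _ => isNoetherianRing_of_ringEquiv _ e.toRingEquiv,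
    fun _ => isNoetherianRing_of_ringEquiv _ e.symm.toRingEquiv⟩

theorem finite_nonpos_iff {P : ℤ → Prop} :
    {i : ℕ | P (-i)}.Finite ↔ {i : ℤ | i ≤ -1 ∧ P i}.Finite := by
  constructor
  · intro h
    refine (h.image fun i : ℕ => -(i : ℤ)).subset ?_
    rintro i ⟨hi, hP⟩
    exact ⟨i.natAbs, by rwa [Set.mem_ofPred_eq, show -(i.natAbs : ℤ) = i by omega], by dsimp; omega⟩
  · intro h
    refine Set.Finite.of_finite_image (f := fun i : ℕ => -(i : ℤ))
      ((h.insert 0).subset ?_) fun i _ j _ hij => by simpa using hij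
    rintro _ ⟨i, hi, rfl⟩
    rcases Nat.eq_zero_or_pos i with rfl | h0
    · simp
    · exact Or.inr ⟨by dsimp; omega, hi⟩

theorem finite_int_iff {P : ℤ → Prop} :
    {i : ℤ | P i}.Finite ↔ {i : ℕ | P i}.Finite ∧ {i : ℤ | i ≤ -1 ∧ P i}.Finite := by
  constructor
  · intro h
    exact ⟨h.preimage Nat.cast_injective.injOn, h.subset fun i hi => hi.2⟩
  · rintro ⟨h1, h2⟩
    refine ((h1.image fun i : ℕ => (i : ℤ)).union h2).subset fun i hi => ?_
    rcases lt_or_ge i 0 with h | h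
    · exact Or.inr ⟨by omega, hi⟩
    · lift i to ℕ using h
      exact Or.inl ⟨i, hi, rfl⟩

end Operators

end EulerianDerivative

/-- noetherian properties of the algebra generated by Eulerian derivatives
`D_{p₁}, …, D_{p_t}` (`p_i` generating a free abelian subgroup of `k˟` of rank `t ≥ 2`)
are characterized by critical density of the points `(1 : p₁ⁱ : ⋯ : p_tⁱ)` of `ℙ^t`. -/
theorem stmt_1 {k : Type*} [Field k] [IsAlgClosed k]
    (t : ℕ) (ht : 2 ≤ t) (p : Fin t → k)
    (hp0 : ∀ i, p i ≠ 0)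
    (hfree : ∀ m : Fin t → ℤ, (∏ i, p i ^ m i) = 1 → ∀ i, m i = 0)
    (D : Fin t → Module.End k (LaurentPolynomial k))
    (hD : ∀ i, ∀ n : ℤ, D i (LaurentPolynomial.T n)
        = ((p i ^ n - 1) / (p i - 1)) • LaurentPolynomial.T (n - 1)) :
    (IsNoetherianRing (Algebra.adjoin k (Set.range D)) ↔
      ∀ (d : ℕ) (F : MvPolynomial (Fin (t + 1)) k), F ≠ 0 → F.IsHomogeneous d →
        {i : ℕ | MvPolynomial.eval (Fin.cons 1 fun j => p j ^ (i : ℤ)) F = 0}.Finite) ∧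
    (IsNoetherianRing (↥(Algebra.adjoin k (Set.range D)))ᵐᵒᵖ ↔
      ∀ (d : ℕ) (F : MvPolynomial (Fin (t + 1)) k), F ≠ 0 → F.IsHomogeneous d →
        {i : ℤ | i ≤ -1 ∧ MvPolynomial.eval (Fin.cons 1 fun j => p j ^ i) F = 0}.Finite) ∧
    ((IsNoetherianRing (Algebra.adjoin k (Set.range D)) ∧
        IsNoetherianRing (↥(Algebra.adjoin k (Set.range D)))ᵐᵒᵖ) ↔
      ∀ (d : ℕ) (F : MvPolynomial (Fin (t + 1)) k), F ≠ 0 → F.IsHomogeneous d →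
        {i : ℤ | MvPolynomial.eval (Fin.cons 1 fun j => p j ^ i) F = 0}.Finite) := by
  have h1 := EulerianDerivative.isNoetherianRing_iff_dense ht hp0 hfree hD
  have h2 := (EulerianDerivative.isNoetherianRing_mop_iff_dense ht hp0 hfree hD).trans
    (forall₄_congr fun d F _ _ => EulerianDerivative.finite_nonpos_iff
      (P := fun i => MvPolynomial.eval (EulerianDerivative.pt p i) F = 0))
  refine ⟨h1, h2, (and_congr h1 h2).trans ?_⟩
  simp only [← forall_and]
  exact forall₄_congr fun d F _ _ => (EulerianDerivative.finite_int_iff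
      (P := fun i => MvPolynomial.eval (EulerianDerivative.pt p i) F = 0)).symm
end
end
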